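/- arXiv:math/0403181 — 6 statements merged into one kernel-verified Lean document; each statement's English description precedes it below -/
import Mathlib

section
/- Let R be a commutative noetherian ring, M an R-module, and N the R[X]-module of finitely supported sequences a : ℕ → M, where R acts componentwise and (X·a)(n) = a(n+1) for all n. For every m ≥ 1, an element a ∈ N lies in the m-th socle series member S_m(N) of the R[X]-module N if and only if a(i) ∈ S_{m−i}(M) (the (m−i)-th socle series member of the R-module M) for all 0 ≤ i ≤ m−1 and a(i) = 0 for all i ≥ m. -/
open Polynomial

/-- The shift endomorphism of the module of finitely supported sequences `ℕ → M`:
`(shift a) n = a (n + 1)`. -/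
noncomputable def shiftMap (R M : Type*) [CommRing R] [AddCommGroup M] [Module R M] :
    (ℕ →₀ M) →ₗ[R] (ℕ →₀ M) :=
  Finsupp.lcomapDomain (fun n => n + 1) (fun _ _ h => Nat.succ_injective h)

/-- The module of divided powers `M[X⁻¹]`: the finitely supported sequences `ℕ → M`
with the `R[X]`-module structure in which `R` acts componentwise and `X` acts by the
shift `(X • a) n = a (n + 1)`. -/
noncomputable abbrev DividedPowersModule (R M : Type*) [CommRing R] [AddCommGroup M]
    [Module R M] : Type _ :=
  Module.AEval' (shiftMap R M)

/-- The socle of a module: the sum of all its simple submodules. -/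
def socle (R M : Type*) [Ring R] [AddCommGroup M] [Module R M] : Submodule R M :=
  sSup {S : Submodule R M | IsSimpleModule R ↥S}

/-- The socle series of a module: `S 0 = ⊥` and `S (m+1)` is the preimage in `M` of the
socle of `M ⧸ S m`. -/
def socleSeries (R M : Type*) [Ring R] [AddCommGroup M] [Module R M] :
    ℕ → Submodule R M
  | 0 => ⊥
  | m + 1 => (socle R (M ⧸ socleSeries R M m)).comap (socleSeries R M m).mkQ

/-!
Over a commutative ring, `S_{m+1}(V)` is generated by the `v` for which some maximal ideal `J`
satisfies `J v ⊆ S_m(V)`. Let `v ∈ N = M[X⁻¹]`. If `X ∉ J`, then some element of `J` fixes `v`,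
because a power of `X` kills `v`; hence `v` already lies in `S_m(N)`. If `X ∈ J`, then `J` is the
preimage under `X ↦ 0` of a maximal ideal `I` of `R`, and `J v ⊆ S_m(N)` says that `S_m(N)` contains
the shift of `v` and all `r v` with `r ∈ I`. Induction on `m` then bounds the `0`-th coefficient of
`v` through `I` and the later ones through the shift. Conversely, the same description of `J` puts
each coefficient of `v`, as a sequence supported at one index, into `S_m(N)`.
-/

section SocleSeries

theorem socleSeries_mono (R M : Type*) [Ring R] [AddCommGroup M] [Module R M] :
    Monotone (socleSeries R M) := by
  refine monotone_nat_of_le_succ fun m => ?_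
  calc
    socleSeries R M m = LinearMap.ker (socleSeries R M m).mkQ := (Submodule.ker_mkQ _).symm
    _ ≤ socleSeries R M (m + 1) := LinearMap.ker_le_comap _

variable {R M : Type*} [CommRing R] [AddCommGroup M] [Module R M]

theorem isSimpleModule_span_singleton_of_isMaximal {I : Ideal R} (hI : I.IsMaximal) {y : M}
    (hy : y ≠ 0) (hIy : ∀ r ∈ I, r • y = 0) :
    IsSimpleModule R (Submodule.span R {y}) := by
  have torsionOf_eq : Ideal.torsionOf R M y = I := by
    refine (hI.eq_of_le ?_ hIy).symm
    rwa [Ne, Ideal.torsionOf_eq_top_iff]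
  rw [isSimpleModule_iff_quot_maximal]
  exact ⟨I, hI, ⟨torsionOf_eq ▸ (Ideal.quotTorsionOfEquivSpanSingleton R M y).symm⟩⟩

variable (R M) in
theorem socle_eq_iSup_torsionBySet :
    socle R M = ⨆ I : MaximalSpectrum R, Submodule.torsionBySet R M I.asIdeal := by
  apply le_antisymm
  · refine sSup_le fun S (hS : IsSimpleModule R S) => ?_
    refine le_iSup_of_le ⟨Module.annihilator R S, IsSimpleModule.annihilator_isMaximal⟩ ?_
    intro y hy
    rw [Submodule.mem_torsionBySet_iff]
    rintro ⟨r, hr⟩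
    exact congrArg Subtype.val (Module.mem_annihilator.mp hr ⟨y, hy⟩)
  · refine iSup_le fun I y hIy => ?_
    obtain rfl | hy := eq_or_ne y 0
    · exact zero_mem _
    rw [Submodule.mem_torsionBySet_iff, Subtype.forall] at hIy
    have simple := isSimpleModule_span_singleton_of_isMaximal I.isMaximal hy hIy
    exact (le_sSup (a := Submodule.span R {y}) simple) (Submodule.mem_span_singleton_self y)

theorem mem_socleSeries_succ_of_isMaximal {m : ℕ} {I : Ideal R} (hI : I.IsMaximal) {y : M}
    (hIy : ∀ r ∈ I, r • y ∈ socleSeries R M m) : y ∈ socleSeries R M (m + 1) := by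
  rw [socleSeries, Submodule.mem_comap, socle_eq_iSup_torsionBySet]
  refine Submodule.mem_iSup_of_mem ⟨I, hI⟩ ?_
  rw [Submodule.mem_torsionBySet_iff, Subtype.forall]
  intro r hr
  rw [← map_smul, Submodule.mkQ_apply, Submodule.Quotient.mk_eq_zero]
  exact hIy r hr

@[elab_as_elim]
theorem socleSeries_succ_induction {m : ℕ} {p : M → Prop} {y : M}
    (hy : y ∈ socleSeries R M (m + 1)) (mem : ∀ z ∈ socleSeries R M m, p z)
    (isMaximal : ∀ I : Ideal R, I.IsMaximal → ∀ z, (∀ r ∈ I, r • z ∈ socleSeries R M m) → p z)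
    (add : ∀ z w, p z → p w → p (z + w)) : p y := by
  rw [socleSeries, Submodule.mem_comap, socle_eq_iSup_torsionBySet] at hy
  suffices ∀ q ∈ ⨆ I : MaximalSpectrum R,
      Submodule.torsionBySet R (M ⧸ socleSeries R M m) I.asIdeal,
      ∀ z, (socleSeries R M m).mkQ z = q → p z from this _ hy y rfl
  intro q hq
  induction hq using Submodule.iSup_induction' with
  | mem I q hq =>
    rintro z rfl
    refine isMaximal I.asIdeal I.isMaximal z fun r hr => ?_
    rw [Submodule.mem_torsionBySet_iff, Subtype.forall] at hq
    rw [← Submodule.Quotient.mk_eq_zero, ← Submodule.mkQ_apply, map_smul]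
    exact hq r hr
  | zero =>
    intro z hz
    exact mem z ((Submodule.Quotient.mk_eq_zero _).mp hz)
  | add q₁ q₂ _ _ ih₁ ih₂ =>
    intro z hz
    obtain ⟨w, hw⟩ := (socleSeries R M m).mkQ_surjective q₁
    have := add w (z - w) (ih₁ w hw) (ih₂ _ (by rw [map_sub, hz, hw, add_sub_cancel_left]))
    rwa [add_sub_cancel] at this

end SocleSeries

theorem exists_mem_smul_eq_self_of_notMem {R M : Type*} [CommRing R] [AddCommGroup M]
    [Module R M] {I : Ideal R} (hI : I.IsMaximal) {x : R} (hx : x ∉ I) {y : M} (hxy : x • y = 0) :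
    ∃ r ∈ I, r • y = y := by
  obtain ⟨s, r, hr, hsr⟩ := hI.exists_inv hx
  refine ⟨r, hr, ?_⟩
  calc
    r • y = (s * x + r) • y := by rw [add_smul, mul_smul, hxy, smul_zero, zero_add]
    _ = y := by rw [hsr, one_smul]

theorem exists_isMaximal_comap_constantCoeff_eq {R : Type*} [CommRing R] {J : Ideal R[X]}
    (hJ : J.IsMaximal) (hX : X ∈ J) :
    ∃ I : Ideal R, I.IsMaximal ∧ I.comap (constantCoeff : R[X] →+* R) = J := by
  have ker_le : RingHom.ker (constantCoeff : R[X] →+* R) ≤ J := by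
    rwa [ker_constantCoeff, Ideal.span_singleton_le_iff_mem]
  refine ⟨J.map constantCoeff,
    Ideal.IsMaximal.map_of_surjective_of_ker_le constantCoeff_surjective ker_le, ?_⟩
  rw [Ideal.comap_map_of_surjective' (constantCoeff : R[X] →+* R) constantCoeff_surjective,
    sup_eq_left.mpr ker_le]

theorem mem_socleSeries_succ_of_X_smul_mem {R V : Type*} [CommRing R] [AddCommGroup V]
    [Module R[X] V] {m : ℕ} {I : Ideal R} (hI : I.IsMaximal) {v : V}
    (hX : (X : R[X]) • v ∈ socleSeries R[X] V m)
    (hC : ∀ r ∈ I, (C r : R[X]) • v ∈ socleSeries R[X] V m) : v ∈ socleSeries R[X] V (m + 1) := by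
  have comap_isMaximal : (I.comap (constantCoeff : R[X] →+* R)).IsMaximal :=
    Ideal.comap_isMaximal_of_surjective _ constantCoeff_surjective
  refine mem_socleSeries_succ_of_isMaximal comap_isMaximal fun p hp => ?_
  rw [← p.divX_mul_X_add, add_smul, mul_smul]
  exact add_mem (Submodule.smul_mem _ _ hX) (hC _ hp)

section DividedPowers

variable {R M : Type*} [CommRing R] [AddCommGroup M] [Module R M]

theorem shiftMap_apply (a : ℕ →₀ M) (n : ℕ) : shiftMap R M a n = a (n + 1) := rfl

theorem shiftMap_pow_apply (a : ℕ →₀ M) (k n : ℕ) : (shiftMap R M ^ k) a n = a (n + k) := by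
  induction k generalizing n with
  | zero => rfl
  | succ k ih => rw [pow_succ', Module.End.mul_apply, shiftMap_apply, ih, add_right_comm, add_assoc]

theorem shiftMap_single_zero (x : M) : shiftMap R M (Finsupp.single 0 x) = 0 := by
  ext n
  rw [shiftMap_apply, Finsupp.single_eq_of_ne n.succ_ne_zero, Finsupp.zero_apply]

theorem shiftMap_single_succ (i : ℕ) (x : M) :
    shiftMap R M (Finsupp.single (i + 1) x) = Finsupp.single i x := by
  ext n
  simp only [shiftMap_apply, Finsupp.single_apply, Nat.add_right_cancel_iff]

theorem exists_shiftMap_pow_eq_zero (a : ℕ →₀ M) : ∃ k : ℕ, (shiftMap R M ^ k) a = 0 := by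
  obtain ⟨k, hk⟩ := a.support.exists_nat_subset_range
  refine ⟨k, Finsupp.ext fun n => ?_⟩
  rw [shiftMap_pow_apply, Finsupp.zero_apply, ← Finsupp.notMem_support_iff]
  intro hn
  have := Finset.mem_range.mp (hk hn)
  lia

theorem exists_X_pow_smul_eq_zero (v : DividedPowersModule R M) :
    ∃ k : ℕ, (X : R[X]) ^ k • v = 0 := by
  obtain ⟨a, rfl⟩ := (Module.AEval'.of (shiftMap R M)).surjective v
  obtain ⟨k, hk⟩ := exists_shiftMap_pow_eq_zero (R := R) a
  exact ⟨k, by rw [Module.AEval'.X_pow_smul_of, Module.End.smul_def, hk, map_zero]⟩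

theorem exists_mem_smul_eq_self_of_X_notMem {J : Ideal R[X]} (hJ : J.IsMaximal) (hX : X ∉ J)
    (v : DividedPowersModule R M) : ∃ p ∈ J, p • v = v := by
  obtain ⟨k, hk⟩ := exists_X_pow_smul_eq_zero v
  exact exists_mem_smul_eq_self_of_notMem hJ (fun h => hX (hJ.isPrime.mem_of_pow_mem k h)) hk

/-- For `i ≥ n`, truncated `n - i` is `0`, so the conclusion says that the coefficient is zero. -/
theorem coeff_mem_socleSeries {n : ℕ} {v : DividedPowersModule R M}
    (hv : v ∈ socleSeries R[X] (DividedPowersModule R M) n) (i : ℕ) :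
    (Module.AEval'.of (shiftMap R M)).symm v i ∈ socleSeries R M (n - i) := by
  induction n generalizing v i with
  | zero =>
    obtain rfl : v = 0 := hv
    exact zero_mem _
  | succ n ih =>
    have coeff_mem_of_mem {w} (hw : w ∈ socleSeries R[X] (DividedPowersModule R M) n) (j : ℕ) :
        (Module.AEval'.of (shiftMap R M)).symm w j ∈ socleSeries R M (n + 1 - j) :=
      socleSeries_mono R M (by lia) (ih hw j)
    refine socleSeries_succ_induction hv ?mem ?isMaximal ?add
    case mem => exact fun w hw => coeff_mem_of_mem hw i
    case add =>
      intro w₁ w₂ h₁ h₂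
      rw [map_add]
      exact add_mem h₁ h₂
    case isMaximal =>
      intro J hJ w hJw
      by_cases hX : X ∈ J
      · obtain ⟨I, hI, rfl⟩ := exists_isMaximal_comap_constantCoeff_eq hJ hX
        cases i with
        | zero =>
          refine mem_socleSeries_succ_of_isMaximal hI fun r hr => ?_
          have := ih (hJw (C r) (by simpa using hr)) 0
          rwa [Module.AEval.C_smul, map_smul] at this
        | succ i =>
          have := ih (hJw X hX) i
          rwa [Module.AEval'.of_symm_X_smul, shiftMap_apply, ← Nat.add_sub_add_right n 1] at this
      · obtain ⟨p, hp, hpw⟩ := exists_mem_smul_eq_self_of_X_notMem hJ hX w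
        exact coeff_mem_of_mem (hpw ▸ hJw p hp) i

theorem of_single_mem_socleSeries {n i : ℕ} {x : M} (hx : x ∈ socleSeries R M (n - i)) :
    Module.AEval'.of (shiftMap R M) (Finsupp.single i x) ∈
      socleSeries R[X] (DividedPowersModule R M) n := by
  induction n generalizing i x with
  | zero =>
    rw [Nat.zero_sub] at hx
    obtain rfl : x = 0 := hx
    rw [Finsupp.single_zero, map_zero]
    exact zero_mem _
  | succ n ih =>
    obtain hni | hin := lt_or_ge n i
    · refine socleSeries_mono R[X] _ n.le_succ (ih ?_)
      rwa [Nat.sub_eq_zero_of_le hni.le, ← Nat.sub_eq_zero_of_le (Nat.succ_le_of_lt hni)]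
    rw [Nat.succ_sub hin] at hx
    refine socleSeries_succ_induction hx ?mem ?isMaximal ?add
    case mem => exact fun z hz => socleSeries_mono R[X] _ n.le_succ (ih hz)
    case add =>
      intro z w hz hw
      rw [Finsupp.single_add, map_add]
      exact add_mem hz hw
    case isMaximal =>
      intro I hI z hIz
      have X_smul_mem : (X : R[X]) • Module.AEval'.of (shiftMap R M) (Finsupp.single i z) ∈
          socleSeries R[X] (DividedPowersModule R M) n := by
        rw [Module.AEval'.X_smul_of]
        cases i with
        | zero =>
          rw [shiftMap_single_zero, map_zero]
          exact zero_mem _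
        | succ i =>
          rw [shiftMap_single_succ]
          refine ih ?_
          rw [show n - i = n - (i + 1) + 1 by lia]
          exact mem_socleSeries_succ_of_isMaximal hI hIz
      refine mem_socleSeries_succ_of_X_smul_mem hI X_smul_mem fun r hr => ?_
      rw [Module.AEval.C_smul, ← map_smul, Finsupp.smul_single]
      exact ih (hIz r hr)

theorem of_mem_socleSeries_iff_forall {m : ℕ} {a : ℕ →₀ M} :
    Module.AEval'.of (shiftMap R M) a ∈ socleSeries R[X] (DividedPowersModule R M) m ↔
      ∀ i, a i ∈ socleSeries R M (m - i) := by
  refine ⟨fun ha i => ?_, fun ha => ?_⟩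
  · simpa only [LinearEquiv.symm_apply_apply] using coeff_mem_socleSeries ha i
  · rw [← a.sum_single, map_finsuppSum]
    exact Submodule.sum_mem _ fun i _ => of_single_mem_socleSeries (ha i)

end DividedPowers

theorem socleSeries_dividedPowers_general (R M : Type*) [CommRing R] [AddCommGroup M]
    [Module R M] (m : ℕ) (a : ℕ →₀ M) :
    Module.AEval'.of (shiftMap R M) a ∈ socleSeries R[X] (DividedPowersModule R M) m ↔
      (∀ i, i < m → a i ∈ socleSeries R M (m - i)) ∧ ∀ i, m ≤ i → a i = 0 := by
  have mem_iff_eq_zero (i : ℕ) (hi : m ≤ i) : a i ∈ socleSeries R M (m - i) ↔ a i = 0 := by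
    rw [Nat.sub_eq_zero_of_le hi]
    exact Submodule.mem_bot R
  rw [of_mem_socleSeries_iff_forall]
  constructor
  · intro ha
    exact ⟨fun i _ => ha i, fun i hi => (mem_iff_eq_zero i hi).mp (ha i)⟩
  · rintro ⟨ha, ha_zero⟩ i
    exact (lt_or_ge i m).elim (ha i) fun hi => (mem_iff_eq_zero i hi).mpr (ha_zero i hi)

/-- For `R` commutative noetherian and `m ≥ 1`, an element `a` of `N = M[X⁻¹]` lies in
`S_m(N)` iff `a i ∈ S_{m-i}(M)` for `0 ≤ i ≤ m−1` and `a i = 0` for `i ≥ m`. -/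
theorem socleSeries_dividedPowers (R M : Type*) [CommRing R] [IsNoetherianRing R]
    [AddCommGroup M] [Module R M] (m : ℕ) (hm : 1 ≤ m) :
    ∀ a : ℕ →₀ M,
      Module.AEval'.of (shiftMap R M) a
          ∈ socleSeries (Polynomial R) (DividedPowersModule R M) m ↔
        ((∀ i : ℕ, i < m → a i ∈ socleSeries R M (m - i)) ∧
          (∀ i : ℕ, m ≤ i → a i = 0)) := by
  exact socleSeries_dividedPowers_general R M m
end

section
/- Let R be a commutative noetherian ring, M an R-module, and N the R[X]-module of finitely supported sequences a : ℕ → M, where R acts componentwise and (X·a)(n) = a(n+1) for all n. If for some m ≥ 1 the socle series of the R-module M satisfies S_m(M) ≠ S_{m−1}(M), then the R[X]-module S_m(N) (the m-th socle series member of N) cannot be generated by fewer than m elements. -/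
/-!
Write `N = M[X⁻¹]` and `S_k` for the `k`-th term of the socle series. A sequence `a` lies in
`S_m(N)` if and only if `a n ∈ S_{m-n}(M)` for all `n`, so the classes of its first `m` terms define
an `R[X]`-linear map, with `X` acting by zero on the target, from `S_m(N)` onto the product of the
layers `S_{k+1}(M) / S_k(M)`, `k < m`.

If `S_m(N)` is finitely generated, then all these layers are, hence `S_m(M)` is noetherian and is
the sum of its `𝔭 ^ m`-torsion submodules. Since `S_m(M) ≠ S_{m-1}(M)`, for some maximal ideal `𝔭`
the `𝔭`-primary part of the series grows at step `m`, and therefore at every earlier step as well,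
so that `R / 𝔭` embeds into each layer. The product of the layers is semisimple, so `(R / 𝔭)^m` is a
quotient of it and hence of `S_m(N)`, and it needs `m` generators.
-/

open Polynomial

section Ring

variable {R M : Type*} [Ring R] [AddCommGroup M] [Module R M]

instance isSemisimpleModule_socle : IsSemisimpleModule R (socle R M) := by
  rw [socle, sSup_eq_iSup]
  exact isSemisimpleModule_biSup_of_isSemisimpleModule_submodule fun S (_ : IsSimpleModule R S) ↦
    inferInstance

theorem mem_socleSeries_succ {k : ℕ} {x : M} :
    x ∈ socleSeries R M (k + 1) ↔ (socleSeries R M k).mkQ x ∈ socle R (M ⧸ socleSeries R M k) :=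
  Iff.rfl

variable (R M) in
theorem monotone_socleSeries : Monotone (socleSeries R M) :=
  monotone_nat_of_le_succ fun k ↦ by
    nth_rw 1 [← (socleSeries R M k).ker_mkQ]
    exact Submodule.comap_mono bot_le

theorem isNoetherian_socleSeries {m : ℕ}
    (h : ∀ k < m, Module.Finite R (socle R (M ⧸ socleSeries R M k))) :
    IsNoetherian R (socleSeries R M m) := by
  induction m with
  | zero => exact inferInstanceAs (IsNoetherian R (⊥ : Submodule R M))
  | succ m ih =>
    have := ih fun k hk ↦ h k (hk.trans m.lt_succ_self)
    have := h m m.lt_succ_self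
    refine isNoetherian_of_range_eq_ker
      (Submodule.inclusion (monotone_socleSeries R M m.le_succ))
      ((socleSeries R M m).mkQ.restrict fun _ hx ↦ mem_socleSeries_succ.1 hx) ?_
    ext x
    rw [Submodule.range_inclusion, LinearMap.mem_ker, ← Subtype.coe_inj]
    exact (Submodule.Quotient.mk_eq_zero (socleSeries R M m)).symm

end Ring

section Torsion

variable {R M : Type*} [CommRing R] [AddCommGroup M] [Module R M]

open Submodule

theorem torsionOf_eq_of_mem_torsionBySet {I : Ideal R} (hI : I.IsMaximal) {x : M} (hx₀ : x ≠ 0)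
    (hx : x ∈ torsionBySet R M I) : Ideal.torsionOf R M x = I :=
  (hI.eq_of_le (mt (Ideal.torsionOf_eq_top_iff R x).1 hx₀) fun r hr ↦
    (mem_torsionBySet_iff _ x).1 hx ⟨r, hr⟩).symm

theorem exists_quotient_injective_of_mem_torsionBySet {I : Ideal R} (hI : I.IsMaximal) {x : M}
    (hx₀ : x ≠ 0) (hx : x ∈ torsionBySet R M I) :
    ∃ f : R ⧸ I →ₗ[R] M, Function.Injective f := by
  obtain rfl := torsionOf_eq_of_mem_torsionBySet hI hx₀ hx
  exact ⟨(R ∙ x).subtype ∘ₗ (Ideal.quotTorsionOfEquivSpanSingleton R M x).toLinearMap,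
    (R ∙ x).subtype_injective.comp (LinearEquiv.injective _)⟩

theorem torsionBySet_le_socle {I : Ideal R} (hI : I.IsMaximal) :
    torsionBySet R M I ≤ socle R M := by
  intro x hx
  rcases eq_or_ne x 0 with rfl | hx₀
  · exact zero_mem _
  obtain rfl := torsionOf_eq_of_mem_torsionBySet hI hx₀ hx
  have hsimple : IsSimpleModule R (R ∙ x) := isSimpleModule_iff_quot_maximal.2
    ⟨_, hI, ⟨(Ideal.quotTorsionOfEquivSpanSingleton R M x).symm⟩⟩
  exact le_sSup (a := R ∙ x) hsimple (mem_span_singleton_self x)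

theorem socle_eq_iSup_torsionBySet_s14 :
    socle R M = ⨆ p : MaximalSpectrum R, torsionBySet R M p.asIdeal := by
  refine le_antisymm (sSup_le fun S (_ : IsSimpleModule R S) x hx ↦ ?_)
    (iSup_le fun p ↦ torsionBySet_le_socle p.isMaximal)
  refine mem_iSup_of_mem ⟨_, IsSimpleModule.annihilator_isMaximal (R := R) (M := S)⟩ ?_
  rw [mem_torsionBySet_iff]
  exact fun r ↦ mem_annihilator.1 r.2 x hx

theorem mkQ_mem_torsionBySet_iff {N : Submodule R M} {s : Set R} {x : M} :
    N.mkQ x ∈ torsionBySet R (M ⧸ N) s ↔ ∀ r ∈ s, r • x ∈ N := by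
  simp [mem_torsionBySet_iff, ← Quotient.mk_smul]

theorem mem_socleSeries_succ_of_smul_mem {I : Ideal R} (hI : I.IsMaximal) {k : ℕ} {x : M}
    (hx : ∀ r ∈ I, r • x ∈ socleSeries R M k) : x ∈ socleSeries R M (k + 1) :=
  mem_socleSeries_succ.2 <| torsionBySet_le_socle hI <| mkQ_mem_torsionBySet_iff.2 hx

theorem socleSeries_succ_le {k : ℕ} {N : Submodule R M} (hk : socleSeries R M k ≤ N)
    (h : ∀ (I : Ideal R) (x : M), I.IsMaximal → (∀ r ∈ I, r • x ∈ socleSeries R M k) → x ∈ N) :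
    socleSeries R M (k + 1) ≤ N := by
  have hsocle : socle R (M ⧸ socleSeries R M k) ≤ N.map (socleSeries R M k).mkQ := by
    rw [socle_eq_iSup_torsionBySet_s14, iSup_le_iff]
    intro p y hy
    obtain ⟨x, rfl⟩ := mkQ_surjective _ y
    exact mem_map_of_mem (h p.asIdeal x p.isMaximal (mkQ_mem_torsionBySet_iff.1 hy))
  calc socleSeries R M (k + 1)
      ≤ (N.map (socleSeries R M k).mkQ).comap (socleSeries R M k).mkQ := comap_mono hsocle
    _ = N := by rw [comap_map_mkQ, sup_eq_right.2 hk]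

theorem smul_mem_torsionBySet_of_mem_mul {I J : Ideal R} {r : R} {x : M} (hr : r ∈ I)
    (hx : x ∈ torsionBySet R M ↑(J * I)) : r • x ∈ torsionBySet R M J := by
  rw [mem_torsionBySet_iff] at hx ⊢
  exact fun s ↦ by rw [← mul_smul]; exact hx ⟨_, Ideal.mul_mem_mul s.2 hr⟩

theorem torsionBySet_pow_le_socleSeries {I : Ideal R} (hI : I.IsMaximal) (k : ℕ) :
    torsionBySet R M ↑(I ^ k) ≤ socleSeries R M k := by
  induction k with
  | zero => simp [socleSeries]
  | succ k ih =>
    intro x hx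
    rw [pow_succ] at hx
    exact mem_socleSeries_succ_of_smul_mem hI fun r hr ↦
      ih (smul_mem_torsionBySet_of_mem_mul hr hx)

theorem iSup_torsionBySet_pow_eq (s : Finset (MaximalSpectrum R)) (k : ℕ) :
    ⨆ p ∈ s, torsionBySet R M ↑(p.asIdeal ^ k) =
      torsionBySet R M ↑((∏ p ∈ s, p.asIdeal) ^ k) := by
  have hcoprime : ∀ p q : MaximalSpectrum R, p ≠ q → IsCoprime (p.asIdeal ^ k) (q.asIdeal ^ k) :=
    fun p q hpq ↦ (Ideal.isCoprime_of_isMaximal fun h ↦ hpq (MaximalSpectrum.ext h)).pow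
  rw [← Finset.prod_pow,
    Ideal.prod_eq_iInf_of_pairwise_isCoprime fun p _ q _ hpq ↦ hcoprime p q hpq]
  exact iSup_torsionBySet_ideal_eq_torsionBySet_iInf (S := s) fun p _ q _ hpq ↦
    (hcoprime p q hpq).sup_eq

theorem mem_iSup_torsionBySet_pow_succ {I : Ideal R} (hI : I.IsMaximal) {k : ℕ} {x : M}
    (hfg : (I • (R ∙ x)).FG)
    (hx : I • (R ∙ x) ≤ ⨆ p : MaximalSpectrum R, torsionBySet R M ↑(p.asIdeal ^ k)) :
    x ∈ ⨆ p : MaximalSpectrum R, torsionBySet R M ↑(p.asIdeal ^ (k + 1)) := by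
  classical
  obtain ⟨s, hs⟩ :=
    CompleteLattice.IsCompactElement.exists_finset_of_le_iSup _ ((fg_iff_compact _).1 hfg) _ hx
  let t := insert ⟨I, hI⟩ s
  let J := ∏ p ∈ t, p.asIdeal
  have hJI : J ≤ I :=
    Ideal.prod_le_inf.trans (Finset.inf_le (f := MaximalSpectrum.asIdeal) (s.mem_insert_self _))
  have hxJ : I • (R ∙ x) ≤ torsionBySet R M ↑(J ^ k) :=
    (hs.trans (biSup_mono fun p hp ↦ s.mem_insert_of_mem hp)).trans_eq
      (iSup_torsionBySet_pow_eq t k)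
  have hJx : J ^ (k + 1) ≤ Ideal.torsionOf R M x := by
    rw [pow_succ, Ideal.mul_le]
    intro a ha b hb
    rw [Ideal.mem_torsionOf_iff, mul_smul]
    exact (mem_torsionBySet_iff _ _).1
      (hxJ (smul_mem_smul (hJI hb) (mem_span_singleton_self x))) ⟨a, ha⟩
  have hxt : x ∈ ⨆ p ∈ t, torsionBySet R M ↑(p.asIdeal ^ (k + 1)) := by
    rw [iSup_torsionBySet_pow_eq, mem_torsionBySet_iff]
    exact fun a ↦ hJx a.2
  exact SetLike.le_def.1 (iSup₂_le_iSup _ _) hxt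

theorem socleSeries_eq_iSup_torsionBySet_pow {m : ℕ} [IsNoetherian R (socleSeries R M m)] {k : ℕ}
    (hk : k ≤ m) :
    socleSeries R M k = ⨆ p : MaximalSpectrum R, torsionBySet R M ↑(p.asIdeal ^ k) := by
  refine le_antisymm ?_ (iSup_le fun p ↦ torsionBySet_pow_le_socleSeries p.isMaximal k)
  induction k with
  | zero => exact bot_le
  | succ k ih =>
    have ih := ih (k.le_succ.trans hk)
    refine socleSeries_succ_le (ih.trans (iSup_mono fun p ↦
      torsionBySet_le_torsionBySet_pow _ _ k.le_succ p.asIdeal)) fun I x hI hx ↦ ?_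
    have hIx : I • (R ∙ x) ≤ socleSeries R M k := by
      refine smul_le.2 fun r hr y hy ↦ ?_
      obtain ⟨c, rfl⟩ := mem_span_singleton.1 hy
      exact smul_comm r c x ▸ smul_mem _ c (hx r hr)
    refine mem_iSup_torsionBySet_pow_succ hI ?_ (hIx.trans ih)
    exact isNoetherian_submodule.1 ‹_› _
      (hIx.trans (monotone_socleSeries R M (k.le_succ.trans hk)))

theorem torsionBySet_pow_le_socleSeries_of_le {I : Ideal R} (hI : I.IsMaximal) {k m : ℕ}
    (hkm : k ≤ m) (h : torsionBySet R M ↑(I ^ (k + 1)) ≤ socleSeries R M k) :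
    torsionBySet R M ↑(I ^ (m + 1)) ≤ socleSeries R M m := by
  induction m, hkm using Nat.le_induction with
  | base => exact h
  | succ m _ ih =>
    intro x hx
    rw [pow_succ] at hx
    exact mem_socleSeries_succ_of_smul_mem hI fun r hr ↦
      ih (smul_mem_torsionBySet_of_mem_mul hr hx)

theorem exists_quotient_injective_socle_quotient {I : Ideal R} (hI : I.IsMaximal) {k : ℕ}
    (h : ¬ torsionBySet R M ↑(I ^ (k + 1)) ≤ socleSeries R M k) :
    ∃ f : R ⧸ I →ₗ[R] socle R (M ⧸ socleSeries R M k), Function.Injective f := by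
  obtain ⟨x, hx, hxk⟩ := SetLike.not_le_iff_exists.1 h
  have hxI : (socleSeries R M k).mkQ x ∈ torsionBySet R (M ⧸ socleSeries R M k) I :=
    mkQ_mem_torsionBySet_iff.2 fun r hr ↦ torsionBySet_pow_le_socleSeries hI k
      (smul_mem_torsionBySet_of_mem_mul hr (pow_succ I k ▸ hx))
  refine exists_quotient_injective_of_mem_torsionBySet hI
    (x := ⟨_, torsionBySet_le_socle hI hxI⟩) (fun h₀ ↦ hxk ?_) ?_
  · exact (Quotient.mk_eq_zero _).1 (congrArg Subtype.val h₀)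
  · rw [mem_torsionBySet_iff] at hxI ⊢
    exact fun r ↦ Subtype.ext (hxI r)

theorem exists_isMaximal_quotient_injective_socle_quotient {m : ℕ}
    [IsNoetherian R (socleSeries R M (m + 1))]
    (hne : socleSeries R M (m + 1) ≠ socleSeries R M m) :
    ∃ I : Ideal R, I.IsMaximal ∧ ∀ k ≤ m,
      ∃ f : R ⧸ I →ₗ[R] socle R (M ⧸ socleSeries R M k), Function.Injective f := by
  obtain ⟨p, hp⟩ : ∃ p : MaximalSpectrum R,
      ¬ torsionBySet R M ↑(p.asIdeal ^ (m + 1)) ≤ socleSeries R M m := by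
    by_contra! h
    refine hne (le_antisymm ?_ (monotone_socleSeries R M m.le_succ))
    exact (socleSeries_eq_iSup_torsionBySet_pow le_rfl).trans_le (iSup_le h)
  exact ⟨p.asIdeal, p.isMaximal, fun k hk ↦ exists_quotient_injective_socle_quotient p.isMaximal <|
    mt (torsionBySet_pow_le_socleSeries_of_le p.isMaximal hk) hp⟩

end Torsion

section SpanRank

theorem natCast_le_spanRank_top_of_surjective {R S M N : Type*} [Semiring R] [Semiring S]
    [AddCommMonoid M] [AddCommMonoid N] [Module R M] [Module S N] {σ : R →+* S}
    [RingHomSurjective σ] (f : M →ₛₗ[σ] N) (hf : Function.Surjective f) {n : ℕ}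
    (h : (n : Cardinal) ≤ (⊤ : Submodule S N).spanRank) :
    (n : Cardinal) ≤ (⊤ : Submodule R M).spanRank := by
  have hle := Submodule.lift_spanRank_map_le f ⊤
  rw [Submodule.map_top, LinearMap.range_eq_top.2 hf] at hle
  exact Cardinal.nat_le_lift_iff.1 ((Cardinal.nat_le_lift_iff.2 h).trans hle)

theorem card_le_spanRank_pi {R ι : Type*} [CommRing R] [Fintype ι] {I : Ideal R}
    (hI : I.IsMaximal) {V : ι → Type*} [∀ i, AddCommGroup (V i)] [∀ i, Module R (V i)]
    [∀ i, IsSemisimpleModule R (V i)]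
    (h : ∀ i, ∃ f : R ⧸ I →ₗ[R] V i, Function.Injective f) :
    (Fintype.card ι : Cardinal) ≤ (⊤ : Submodule R (∀ i, V i)).spanRank := by
  choose f hf using h
  obtain ⟨g, hg⟩ := IsSemisimpleModule.extension_property (LinearMap.piMap f)
    (Function.Injective.piMap hf) LinearMap.id
  have hsurj : Function.Surjective g := fun y ↦ ⟨_, LinearMap.congr_fun hg y⟩
  let := Ideal.Quotient.field I
  refine natCast_le_spanRank_top_of_surjective g hsurj ?_
  calc (Fintype.card ι : Cardinal)
      = Module.rank (R ⧸ I) (ι → R ⧸ I) := rank_fun'.symm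
    _ ≤ (⊤ : Submodule (R ⧸ I) (ι → R ⧸ I)).spanRank := Submodule.rank_le_spanRank
    _ ≤ (⊤ : Submodule R (ι → R ⧸ I)).spanRank := Submodule.le_spanRank_restrictScalars ⊤

end SpanRank

section Polynomial

variable {R : Type*} [CommRing R]

instance ringHomSurjective_constantCoeff : RingHomSurjective (constantCoeff : R[X] →+* R) :=
  ⟨constantCoeff_surjective⟩

theorem isMaximal_comap_C {J : Ideal R[X]} (hJ : J.IsMaximal) (hX : X ∈ J) :
    (J.comap (C : R →+* R[X])).IsMaximal := by
  have hsurj : Function.Surjective ((Ideal.Quotient.mk J).comp (C : R →+* R[X])) := by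
    intro y
    obtain ⟨p, rfl⟩ := Ideal.Quotient.mk_surjective y
    refine ⟨p.coeff 0, Ideal.Quotient.eq.2 ?_⟩
    rw [← neg_mem_iff, neg_sub, ← p.divX_mul_X_add]
    simpa using J.mul_mem_left p.divX hX
  have := (Ideal.bot_quotient_isMaximal_iff J).2 hJ
  have := Ideal.comap_isMaximal_of_surjective _ hsurj (K := ⊥)
  rwa [← Ideal.comap_comap, ← RingHom.ker_eq_comap_bot, Ideal.mk_ker] at this

theorem smul_eq_divX_smul_X_smul_add {N : Type*} [AddCommGroup N] [Module R N] [Module R[X] N]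
    [IsScalarTower R R[X] N] (p : R[X]) (a : N) :
    p • a = p.divX • (X : R[X]) • a + p.coeff 0 • a := by
  conv_lhs => rw [← p.divX_mul_X_add]
  rw [add_smul, mul_smul, ← algebraMap_eq, algebraMap_smul]

end Polynomial

namespace DividedPowersModule

variable {R M : Type*} [CommRing R] [AddCommGroup M] [Module R M]

/-- The `n`-th term of a sequence in `M[X⁻¹]`, that is, its coefficient at `X⁻ⁿ`. -/
noncomputable def coeff (n : ℕ) : DividedPowersModule R M →ₗ[R] M :=
  Finsupp.lapply n ∘ₗ (Module.AEval'.of (shiftMap R M)).symm.toLinearMap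

/-- The sequence in `M[X⁻¹]` whose `n`-th term is a given element and whose other terms vanish. -/
noncomputable def single (n : ℕ) : M →ₗ[R] DividedPowersModule R M :=
  (Module.AEval'.of (shiftMap R M)).toLinearMap ∘ₗ Finsupp.lsingle n

theorem coeff_single (i n : ℕ) (x : M) :
    coeff i (single n x : DividedPowersModule R M) = if n = i then x else 0 :=
  Finsupp.single_apply

@[ext]
theorem ext {a b : DividedPowersModule R M} (h : ∀ n, coeff n a = coeff n b) : a = b :=
  (Module.AEval'.of (shiftMap R M)).symm.injective (Finsupp.ext h)

theorem exists_coeff_eq_zero (a : DividedPowersModule R M) : ∃ n, ∀ i ≥ n, coeff i a = 0 := by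
  obtain ⟨n, hn⟩ := ((Module.AEval'.of (shiftMap R M)).symm a).support.exists_nat_subset_range
  exact ⟨n, fun i hi ↦ Finsupp.notMem_support_iff.1 fun h ↦
    hi.not_gt (Finset.mem_range.1 (hn h))⟩

theorem mem_of_single_coeff_mem {P : AddSubmonoid (DividedPowersModule R M)}
    {a : DividedPowersModule R M} (h : ∀ n, single n (coeff n a) ∈ P) : a ∈ P := by
  obtain ⟨n, hn⟩ := exists_coeff_eq_zero a
  have ha : a = ∑ i ∈ Finset.range n, single i (coeff i a) := by
    ext j
    simp only [map_sum, coeff_single, Finset.sum_ite_eq', Finset.mem_range]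
    split_ifs with hj
    exacts [rfl, hn j (not_lt.1 hj)]
  exact ha ▸ sum_mem fun i _ ↦ h i

theorem coeff_X_smul (n : ℕ) (a : DividedPowersModule R M) :
    coeff n ((X : R[X]) • a) = coeff (n + 1) a := by
  rw [coeff, LinearMap.comp_apply, LinearEquiv.coe_coe, Module.AEval'.of_symm_X_smul]
  rfl

theorem coeff_X_pow_smul (n k : ℕ) (a : DividedPowersModule R M) :
    coeff n ((X ^ k : R[X]) • a) = coeff (n + k) a := by
  induction k generalizing a with
  | zero => simp
  | succ k ih => rw [pow_succ, mul_smul, ih, coeff_X_smul, add_assoc]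

theorem exists_X_pow_smul_eq_zero (a : DividedPowersModule R M) :
    ∃ n, (X ^ n : R[X]) • a = 0 := by
  obtain ⟨n, hn⟩ := exists_coeff_eq_zero a
  refine ⟨n, ext fun i ↦ ?_⟩
  rw [coeff_X_pow_smul, hn _ (Nat.le_add_left n i), map_zero]

theorem X_smul_single_zero (x : M) : (X : R[X]) • (single 0 x : DividedPowersModule R M) = 0 := by
  ext i
  simp [coeff_X_smul, coeff_single]

theorem X_smul_single_succ (n : ℕ) (x : M) :
    (X : R[X]) • (single (n + 1) x : DividedPowersModule R M) = single n x := by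
  ext i
  simp [coeff_X_smul, coeff_single]

/-- The sequences in `M[X⁻¹]` whose `n`-th term lies in `P n`. The family `P` has to be antitone
because `X` shifts the terms to the left. -/
noncomputable def coeffSubmodule (P : ℕ → Submodule R M) (hP : Antitone P) :
    Submodule R[X] (DividedPowersModule R M) where
  carrier := {a | ∀ n, coeff n a ∈ P n}
  zero_mem' n := by simp
  add_mem' ha hb n := by simpa using add_mem (ha n) (hb n)
  smul_mem' p a ha := by
    induction p using Polynomial.induction_on' with
    | add p q hp hq => exact fun n ↦ by simpa [add_smul] using add_mem (hp n) (hq n)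
    | monomial k r =>
      intro n
      rw [← smul_X_eq_monomial, smul_assoc, map_smul, coeff_X_pow_smul]
      exact Submodule.smul_mem _ r (hP (n.le_add_right k) (ha (n + k)))

theorem socleSeries_le_coeffSubmodule (k : ℕ) :
    socleSeries R[X] (DividedPowersModule R M) k ≤
      coeffSubmodule (fun n ↦ socleSeries R M (k - n))
        fun _ _ h ↦ monotone_socleSeries R M (Nat.sub_le_sub_left h k) := by
  induction k with
  | zero => exact bot_le
  | succ k ih =>
    have hmono (a : DividedPowersModule R M) (ha : a ∈ socleSeries R[X] _ k) (n : ℕ) :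
        coeff n a ∈ socleSeries R M (k + 1 - n) :=
      monotone_socleSeries R M (Nat.sub_le_sub_right k.le_succ n) (ih ha n)
    refine socleSeries_succ_le hmono fun J a hJ ha ↦ ?_
    by_cases hX : X ∈ J
    · rintro (_ | n)
      · exact mem_socleSeries_succ_of_smul_mem (isMaximal_comap_C hJ hX) fun r hr ↦ by
          simpa [← algebraMap_eq, algebraMap_smul] using ih (ha (C r) hr) 0
      · simpa [← coeff_X_smul] using ih (ha X hX) n
    · -- `X` acts nilpotently on `a` and is invertible modulo `J`, so some `q ∈ J` fixes `a`.
      obtain ⟨n, hn⟩ := exists_X_pow_smul_eq_zero a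
      obtain ⟨p, q, hq, hpq⟩ := hJ.exists_inv (mt (hJ.isPrime.mem_of_pow_mem n) hX)
      have hqa : q • a = a := by
        rw [eq_sub_of_add_eq' hpq, sub_smul, one_smul, mul_smul, hn, smul_zero, sub_zero]
      exact hmono a (hqa ▸ ha q hq)

theorem single_mem_socleSeries {j n : ℕ} {x : M} (hx : x ∈ socleSeries R M j) :
    single n x ∈ socleSeries R[X] (DividedPowersModule R M) (j + n) := by
  induction j generalizing n x with
  | zero => rw [(Submodule.mem_bot R).1 hx, map_zero]; exact zero_mem _
  | succ j ih =>
    refine socleSeries_succ_le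
      (N := ((socleSeries R[X] _ (j + 1 + n)).restrictScalars R).comap (single n))
      (fun y hy ↦ monotone_socleSeries _ _ (by lia) (ih hy)) (fun I y hI hy ↦ ?_) hx
    have hX : ∀ i, (X : R[X]) • single i y ∈ socleSeries R[X] (DividedPowersModule R M) (j + i) →
        single i y ∈ socleSeries R[X] (DividedPowersModule R M) (j + i + 1) := fun i hi ↦
      mem_socleSeries_succ_of_smul_mem
        (Ideal.comap_isMaximal_of_surjective constantCoeff constantCoeff_surjective (K := I))
        fun p hp ↦ by
          rw [smul_eq_divX_smul_X_smul_add, ← map_smul (single i)]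
          exact add_mem (Submodule.smul_mem _ _ hi) (ih (hy _ hp))
    rw [Submodule.mem_comap, Submodule.restrictScalars_mem, add_right_comm]
    induction n with
    | zero => exact hX 0 (by rw [X_smul_single_zero]; exact zero_mem _)
    | succ n ihn => exact hX (n + 1) (by rw [X_smul_single_succ]; exact ihn)

theorem mem_socleSeries_iff {k : ℕ} {a : DividedPowersModule R M} :
    a ∈ socleSeries R[X] (DividedPowersModule R M) k ↔
      ∀ n, coeff n a ∈ socleSeries R M (k - n) := by
  refine ⟨fun ha ↦ socleSeries_le_coeffSubmodule k ha, fun ha ↦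
    mem_of_single_coeff_mem (P := (socleSeries R[X] _ k).toAddSubmonoid) fun n ↦ ?_⟩
  rcases le_total n k with hn | hn
  · simpa [Nat.sub_add_cancel hn] using single_mem_socleSeries (n := n) (ha n)
  · have h₀ : coeff n a = 0 := by simpa [Nat.sub_eq_zero_of_le hn, socleSeries] using ha n
    simp [h₀]

theorem X_smul_mem_socleSeries {k : ℕ} {a : DividedPowersModule R M}
    (ha : a ∈ socleSeries R[X] (DividedPowersModule R M) k) :
    (X : R[X]) • a ∈ socleSeries R[X] (DividedPowersModule R M) (k - 1) := by
  refine mem_socleSeries_iff.2 fun n ↦ ?_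
  rw [coeff_X_smul, Nat.sub_sub, add_comm 1 n]
  exact mem_socleSeries_iff.1 ha (n + 1)

variable (R M) in
/-- The `R[X]`-linear map from the `m`-th socle of `M[X⁻¹]` onto the product of the first `m` layers
of the socle series of `M`, on which `X` acts by `0`. The `k`-th layer receives the class of the
term with index `m - 1 - k`. -/
noncomputable def layers (m : ℕ) :
    socleSeries R[X] (DividedPowersModule R M) m →ₛₗ[(constantCoeff : R[X] →+* R)]
      ∀ k : Fin m, socle R (M ⧸ socleSeries R M k) where
  toFun a k := ⟨(socleSeries R M k).mkQ (coeff k.rev a.1), by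
    have ha := mem_socleSeries_iff.1 a.2 k.rev
    rwa [show m - k.rev = k + 1 by rw [Fin.val_rev]; lia] at ha⟩
  map_add' a b := by ext; simp
  map_smul' p a := by
    ext k
    have hX : coeff k.rev (p.divX • (X : R[X]) • a.1) ∈ socleSeries R M k := by
      have hpX := Submodule.smul_mem _ p.divX (X_smul_mem_socleSeries a.2)
      have hk := mem_socleSeries_iff.1 hpX k.rev
      rwa [show m - 1 - k.rev = k by rw [Fin.val_rev]; lia] at hk
    simpa [smul_eq_divX_smul_X_smul_add p a.1] using hX

theorem layers_surjective (m : ℕ) : Function.Surjective (layers R M m) := by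
  intro y
  choose x hx using fun k : Fin m ↦ (socleSeries R M k).mkQ_surjective (y k)
  have hxk (k : Fin m) : x k ∈ socleSeries R M (k + 1) :=
    mem_socleSeries_succ.2 (hx k ▸ (y k).2)
  refine ⟨⟨∑ k, single k.rev (x k), sum_mem fun k _ ↦ ?_⟩, ?_⟩
  · have hk := single_mem_socleSeries (n := k.rev) (hxk k)
    rwa [show k + 1 + k.rev = m by rw [Fin.val_rev]; lia] at hk
  · ext k
    simpa [layers, coeff_single, Fin.val_inj, -Fin.val_rev] using hx k

end DividedPowersModule

open DividedPowersModule in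
theorem socleSeries_dividedPowers_generators_general (R M : Type*) [CommRing R] [AddCommGroup M]
    [Module R M] (m : ℕ) (hne : socleSeries R M m ≠ socleSeries R M (m - 1)) :
    (m : Cardinal) ≤ (socleSeries R[X] (DividedPowersModule R M) m).spanRank := by
  obtain _ | m := m
  · exact absurd rfl hne
  by_contra! hlt
  have : Module.Finite R[X] (socleSeries R[X] (DividedPowersModule R M) (m + 1)) :=
    .of_fg (Submodule.spanRank_finite_iff_fg.1 (hlt.trans Cardinal.natCast_lt_aleph0))
  have : Module.Finite R (∀ k : Fin (m + 1), socle R (M ⧸ socleSeries R M k)) :=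
    .of_surjective _ (layers_surjective (m + 1))
  have : IsNoetherian R (socleSeries R M (m + 1)) :=
    isNoetherian_socleSeries fun k hk ↦
      .of_pi (fun k : Fin (m + 1) ↦ socle R (M ⧸ socleSeries R M k)) ⟨k, hk⟩
  obtain ⟨I, hI, hinj⟩ := exists_isMaximal_quotient_injective_socle_quotient hne
  refine hlt.not_ge ?_
  rw [← Submodule.spanRank_top]
  refine natCast_le_spanRank_top_of_surjective _ (layers_surjective (m + 1)) ?_
  simpa using card_le_spanRank_pi hI fun k : Fin (m + 1) ↦ hinj k k.is_le

/-- For `R` commutative noetherian, if `S_m(M) ≠ S_{m−1}(M)` for some `m ≥ 1`, then the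
`R[X]`-module `S_m(N)`, `N = M[X⁻¹]`, cannot be generated by fewer than `m` elements. -/
theorem socleSeries_dividedPowers_generators (R M : Type*) [CommRing R]
    [IsNoetherianRing R] [AddCommGroup M] [Module R M] (m : ℕ) (hm : 1 ≤ m)
    (hne : socleSeries R M m ≠ socleSeries R M (m - 1)) :
    ¬ ∃ G : Finset (DividedPowersModule R M), G.card < m ∧
        Submodule.span (Polynomial R) (G : Set (DividedPowersModule R M))
          = socleSeries (Polynomial R) (DividedPowersModule R M) m := by
  rintro ⟨G, hG, hspan⟩
  have hcard := (hspan ▸ socleSeries_dividedPowers_generators_general R M m hne).trans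
    (Submodule.spanRank_span_le_card _)
  exact hG.not_ge (by simpa using hcard)
end

section
/- Let R be a commutative noetherian ring, M an R-module, and N the R[X]-module of finitely supported sequences a : ℕ → M, where R acts componentwise and (X·a)(n) = a(n+1) for all n. Then M is an injective R-module if and only if N is an injective R[X]-module. -/
open Polynomial

/-!
Over a noetherian ring `A`, Artin–Rees shows that the `I`-power torsion of an injective module is
injective: if `S ≤ Y` is finitely generated and `I ^ k` kills the image of `g : S → E`, then `g`
vanishes on `S ∩ I ^ n Y` for large `n`, so `g` extends to a map out of `Y / I ^ n Y`, and the image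
of such a map is again `I`-power torsion.

For `A = R[X]`, the module of all sequences `ℕ → M` under the shift is coinduced from `M`:
`R[X]`-linear maps `Y → M^ℕ` are the same as `R`-linear maps `Y → M`, so it is injective when `M`
is. The finitely supported sequences are precisely its `X`-power torsion elements.

Conversely, `M` sits in `M[X⁻¹]` as the sequences concentrated in degree `0`. An `R`-linear
extension problem becomes `R[X]`-linear by letting `X` act as `0`, and a solution with values in
`M[X⁻¹]` is brought back to `M` by the degree `0` coefficient.
-/

universe v

section Extension

variable {A : Type*} {Q : Type v} [Ring A] [AddCommGroup Q] [Module A Q]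

theorem injective_of_linearEquiv [Module.Injective A Q] {Q' : Type v} [AddCommGroup Q']
    [Module A Q'] (e : Q' ≃ₗ[A] Q) : Module.Injective A Q' where
  out _ _ _ _ _ _ f hf g := by
    obtain ⟨h, hh⟩ := Module.Injective.out f hf (e.toLinearMap ∘ₗ g)
    exact ⟨e.symm.toLinearMap ∘ₗ h, fun x => e.symm_apply_eq.2 (hh x)⟩

theorem exists_comp_eq_of_ker_le [Module.Injective A Q] {S Z : Type v} [AddCommGroup S]
    [AddCommGroup Z] [Module A S] [Module A Z] (q : S →ₗ[A] Z) (g : S →ₗ[A] Q)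
    (hqg : LinearMap.ker q ≤ LinearMap.ker g) : ∃ h : Z →ₗ[A] Q, h ∘ₗ q = g := by
  obtain ⟨h, hh⟩ := Module.Injective.out ((LinearMap.ker q).liftQ q le_rfl)
    (LinearMap.ker_eq_bot.1 (Submodule.ker_liftQ_eq_bot' _ _ rfl)) ((LinearMap.ker q).liftQ g hqg)
  exact ⟨h, LinearMap.ext fun s => hh (Submodule.Quotient.mk s)⟩

theorem exists_linearPMap_ge_mem_domain
    (extends_of_finite : ∀ (Y : Type v) [AddCommGroup Y] [Module A Y] [Module.Finite A Y]
      (S : Submodule A Y) (g : S →ₗ[A] Q), ∃ h : Y →ₗ[A] Q, ∀ s : S, h s = g s)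
    {Y : Type v} [AddCommGroup Y] [Module A Y] (p : Y →ₗ.[A] Q) (y : Y) :
    ∃ p' : Y →ₗ.[A] Q, p ≤ p' ∧ y ∈ p'.domain := by
  let P := Submodule.span A {y}
  let S : Submodule A P := p.domain.comap P.subtype
  let toDomain : S →ₗ[A] p.domain :=
    (P.subtype ∘ₗ S.subtype).codRestrict p.domain fun s => s.2
  obtain ⟨h, hh⟩ := extends_of_finite P S (p.toFun ∘ₗ toDomain)
  have agree : ∀ (x : p.domain) (z : P), (x : Y) = z → p x = h z := by
    rintro ⟨_, hx⟩ z rfl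
    exact (hh ⟨z, hx⟩).symm
  exact ⟨p.sup ⟨P, h⟩ agree, LinearPMap.left_le_sup _ _ agree,
    (LinearPMap.right_le_sup _ _ agree).1 (Submodule.mem_span_singleton_self y)⟩

/-- Replaces Baer's criterion, which tests on ideals of `A`, hence on modules outside the universe
`v` in which `Module.Injective` provides extensions. -/
theorem injective_of_forall_finite_exists_extension
    (extends_of_finite : ∀ (Y : Type v) [AddCommGroup Y] [Module A Y] [Module.Finite A Y]
      (S : Submodule A Y) (g : S →ₗ[A] Q), ∃ h : Y →ₗ[A] Q, ∀ s : S, h s = g s) :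
    Module.Injective A Q where
  out X Y _ _ _ _ f hf g := by
    have : Fact (Function.Injective f) := ⟨hf⟩
    let E := Module.Baer.extensionOfMax f g
    have domain_eq_top : ∀ y, y ∈ E.domain := fun y => by
      obtain ⟨p, hEp, hy⟩ := exists_linearPMap_ge_mem_domain extends_of_finite E.toLinearPMap y
      let E' : Module.Baer.ExtensionOf f g :=
        { p with
          le := E.le.trans hEp.1
          is_extension := fun x => (E.is_extension x).trans (hEp.2 rfl) }
      have hE' : E' = E := Module.Baer.extensionOfMax_is_max f g E' hEp
      exact hE' ▸ hy
    exact ⟨E.toFun ∘ₗ LinearMap.id.codRestrict E.domain domain_eq_top,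
      fun x => (E.is_extension x).symm⟩

end Extension

section Augmentation

variable {R A : Type*} {M N : Type v} [CommRing R] [Ring A] [Algebra R A] [AddCommGroup M]
  [Module R M] [AddCommGroup N] [Module R N] [Module A N] [IsScalarTower R A N]

theorem injective_of_leftInverse_of_augmentation [Module.Injective A N] (ε : A →ₐ[R] R)
    (ι : M →ₗ[R] N) (ρ : N →ₗ[R] M) (smul_ι : ∀ (a : A) (m : M), a • ι m = ι (ε a • m))
    (hρι : Function.LeftInverse ρ ι) : Module.Injective R M where
  out X Y _ _ _ _ f hf g := by
    let _ : Module A X := Module.compHom X ε.toRingHom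
    let _ : Module A Y := Module.compHom Y ε.toRingHom
    have : IsScalarTower R A Y := .of_algebraMap_smul fun r y =>
      congrArg (· • y) (ε.commutes r)
    let fA : X →ₗ[A] Y := { f with map_smul' := fun a x => f.map_smul (ε a) x }
    let gA : X →ₗ[A] N :=
      { ι ∘ₗ g with
        map_smul' := fun a x => (congrArg ι (g.map_smul (ε a) x)).trans (smul_ι a (g x)).symm }
    obtain ⟨h, hh⟩ := Module.Injective.out fA hf gA
    refine ⟨ρ ∘ₗ h.restrictScalars R, fun x => ?_⟩
    calc ρ (h (f x)) = ρ (ι (g x)) := congrArg ρ (hh x)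
      _ = g x := hρι (g x)

end Augmentation

section PowTorsion

variable {A : Type*} [CommRing A] (I : Ideal A)

/-- The `I`-power torsion `Γ_I(E)` of a module: the elements killed by some power of `I`. -/
def powTorsion (E : Type*) [AddCommGroup E] [Module A E] : Submodule A E :=
  ⨆ n : ℕ, Submodule.torsionBySet A E (I ^ n : Ideal A)

variable {I} {E : Type*} [AddCommGroup E] [Module A E]

theorem directed_torsionBySet_pow :
    Directed (· ≤ ·) fun n : ℕ => Submodule.torsionBySet A E (I ^ n : Ideal A) :=
  Monotone.directed_le fun _ _ h => Submodule.torsionBySet_le_torsionBySet_of_subset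
    (Ideal.pow_le_pow_right h)

theorem mem_powTorsion_iff {x : E} :
    x ∈ powTorsion I E ↔ ∃ n : ℕ, x ∈ Submodule.torsionBySet A E (I ^ n : Ideal A) :=
  Submodule.mem_iSup_of_directed _ directed_torsionBySet_pow

theorem mem_powTorsion_span_singleton_iff {a : A} {x : E} :
    x ∈ powTorsion (Ideal.span {a}) E ↔ ∃ n : ℕ, a ^ n • x = 0 := by
  simp only [mem_powTorsion_iff, Ideal.span_singleton_pow, Submodule.torsionBySet_span_singleton_eq,
    Submodule.mem_torsionBy_iff]

theorem exists_le_torsionBySet_pow_of_fg {P : Submodule A E} (hP : P.FG)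
    (hPI : P ≤ powTorsion I E) :
    ∃ n : ℕ, P ≤ Submodule.torsionBySet A E (I ^ n : Ideal A) := by
  obtain ⟨_, ⟨n, rfl⟩, hn⟩ := (Submodule.fg_iff_compact P).1 hP _ _ (Set.range_nonempty _)
    directed_torsionBySet_pow.directedOn_range isLUB_iSup hPI
  exact ⟨n, hn⟩

variable [IsNoetherianRing A]

theorem exists_comap_pow_smul_top_le_ker {Y : Type*} [AddCommGroup Y] [Module A Y]
    [Module.Finite A Y] {S : Submodule A Y} (g : S →ₗ[A] E)
    (hg : LinearMap.range g ≤ powTorsion I E) :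
    ∃ n : ℕ, (I ^ n • ⊤ : Submodule A Y).comap S.subtype ≤ LinearMap.ker g := by
  obtain ⟨k, hk⟩ := exists_le_torsionBySet_pow_of_fg (Submodule.fg_range g) hg
  obtain ⟨c, hc⟩ := Ideal.exists_pow_inf_eq_pow_smul I S
  have artin_rees : I ^ (k + c) • ⊤ ⊓ S ≤ I ^ k • S := by
    rw [hc (k + c) (Nat.le_add_left c k), Nat.add_sub_cancel]
    exact Submodule.smul_mono le_rfl inf_le_right
  have pow_smul_le_ker : I ^ k • (⊤ : Submodule A S) ≤ LinearMap.ker g :=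
    Submodule.smul_le.2 fun a ha s _ => by
      rw [LinearMap.mem_ker, map_smul]
      exact (Submodule.mem_torsionBySet_iff _ _).1 (hk ⟨s, rfl⟩) ⟨a, ha⟩
  exact ⟨k + c, fun s hs =>
    pow_smul_le_ker ((Submodule.mem_smul_top_iff _ S s).2 (artin_rees ⟨hs, s.2⟩))⟩

theorem injective_powTorsion (I : Ideal A) (E : Type*) [AddCommGroup E] [Module A E]
    [Module.Injective A E] : Module.Injective A (powTorsion I E) := by
  refine injective_of_forall_finite_exists_extension fun Y _ _ _ S g => ?_
  let g' : S →ₗ[A] E := (powTorsion I E).subtype ∘ₗ g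
  obtain ⟨n, hn⟩ := exists_comap_pow_smul_top_le_ker g'
    ((LinearMap.range_comp_le_range _ _).trans (Submodule.range_subtype _).le)
  let T : Submodule A Y := I ^ n • ⊤
  obtain ⟨h, hh⟩ := exists_comp_eq_of_ker_le (T.mkQ ∘ₗ S.subtype) g' (by
    rwa [LinearMap.ker_comp, Submodule.ker_mkQ])
  have mem_torsion : ∀ y, h (T.mkQ y) ∈ powTorsion I E := fun y =>
    mem_powTorsion_iff.2 ⟨n, (Submodule.mem_torsionBySet_iff _ _).2 fun a => by
      have mkQ_smul_eq_zero : T.mkQ ((a : A) • y) = 0 := by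
        rw [Submodule.mkQ_apply, Submodule.Quotient.mk_eq_zero]
        exact Submodule.smul_mem_smul a.2 trivial
      rw [← map_smul, ← map_smul, mkQ_smul_eq_zero, map_zero]⟩
  exact ⟨(h ∘ₗ T.mkQ).codRestrict _ mem_torsion, fun s => Subtype.ext (LinearMap.congr_fun hh s)⟩

end PowTorsion

section PolynomialModule

variable {R Z W : Type*} [CommSemiring R] [AddCommMonoid Z] [AddCommMonoid W]
  [Module R Z] [Module R W] [Module R[X] Z] [Module R[X] W] [IsScalarTower R R[X] Z]
  [IsScalarTower R R[X] W]

theorem smul_eq_eval_zero_smul_of_X_smul_eq_zero {z : Z} (hz : (X : R[X]) • z = 0) (p : R[X]) :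
    p • z = p.eval 0 • z := by
  conv_lhs => rw [← divX_mul_X_add p]
  rw [add_smul, mul_smul, hz, smul_zero, zero_add, coeff_zero_eq_eval_zero,
    C_eq_algebraMap, algebraMap_smul]

/-- An `R`-linear map commuting with `X`, as an `R[X]`-linear map. -/
noncomputable def polynomialLinearMap (f : Z →ₗ[R] W)
    (hf : ∀ z, f ((X : R[X]) • z) = (X : R[X]) • f z) : Z →ₗ[R[X]] W :=
  LinearMap.ofAEval (Algebra.lsmul R R Z (X : R[X])) f hf ∘ₗ
    (LinearEquiv.ofAEval (Algebra.lsmul R R Z (X : R[X])) (LinearEquiv.refl R Z) fun _ =>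
      rfl).symm.toLinearMap

end PolynomialModule

/-- The module `M[[X⁻¹]]` of all sequences `ℕ → M`, with `R` acting componentwise and `X` acting by
the shift `(X • a) n = a (n + 1)`; it contains `M[X⁻¹]` and is the `R[X]`-module coinduced
from `M`. -/
noncomputable abbrev InverseSeriesModule (R M : Type*) [CommRing R] [AddCommGroup M]
    [Module R M] : Type _ :=
  Module.AEval' (LinearMap.funLeft R M Nat.succ)

namespace InverseSeriesModule

variable {R M : Type*} [CommRing R] [AddCommGroup M] [Module R M]

/-- The `n`-th coefficient of an element of `M[[X⁻¹]]`. -/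
noncomputable def coeff (n : ℕ) : InverseSeriesModule R M →ₗ[R] M :=
  LinearMap.proj n ∘ₗ (Module.AEval'.of (LinearMap.funLeft R M Nat.succ)).symm.toLinearMap

theorem ext {a b : InverseSeriesModule R M} (h : ∀ n, coeff n a = coeff n b) : a = b :=
  funext h

theorem coeff_X_smul (n : ℕ) (a : InverseSeriesModule R M) :
    coeff n ((X : R[X]) • a) = coeff (n + 1) a := by
  obtain ⟨a, rfl⟩ := (Module.AEval'.of (LinearMap.funLeft R M Nat.succ)).surjective a
  rw [Module.AEval'.X_smul_of]
  rfl

theorem coeff_X_pow_smul (k n : ℕ) (a : InverseSeriesModule R M) :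
    coeff n ((X ^ k : R[X]) • a) = coeff (n + k) a := by
  induction k generalizing n with
  | zero => simp
  | succ k ih => rw [pow_succ', mul_smul, coeff_X_smul, ih, add_assoc, add_comm 1 k]

/-- The `R[X]`-linear map `y ↦ (φ (X ^ n • y))ₙ` corresponding to an `R`-linear map `φ` under the
universal property of the coinduced module. -/
noncomputable def lift {Y : Type*} [AddCommGroup Y] [Module R Y] [Module R[X] Y]
    [IsScalarTower R R[X] Y] (φ : Y →ₗ[R] M) : Y →ₗ[R[X]] InverseSeriesModule R M :=
  polynomialLinearMap
    ((Module.AEval'.of (LinearMap.funLeft R M Nat.succ)).toLinearMap ∘ₗ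
      LinearMap.pi fun n => φ ∘ₗ Algebra.lsmul R R Y (X ^ n : R[X]))
    fun y => ext fun n => by
      rw [coeff_X_smul]
      change φ ((X ^ n : R[X]) • (X : R[X]) • y) = φ ((X ^ (n + 1) : R[X]) • y)
      rw [pow_succ, mul_smul]

theorem coeff_lift {Y : Type*} [AddCommGroup Y] [Module R Y] [Module R[X] Y]
    [IsScalarTower R R[X] Y] (φ : Y →ₗ[R] M) (n : ℕ) (y : Y) :
    coeff n (lift φ y) = φ ((X ^ n : R[X]) • y) :=
  rfl

theorem injective [Module.Injective R M] : Module.Injective R[X] (InverseSeriesModule R M) where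
  out Y Z _ _ _ _ f hf g := by
    let _ : Module R Y := Module.compHom Y (algebraMap R R[X])
    let _ : Module R Z := Module.compHom Z (algebraMap R R[X])
    have : IsScalarTower R R[X] Y := .of_algebraMap_smul fun _ _ => rfl
    have : IsScalarTower R R[X] Z := .of_algebraMap_smul fun _ _ => rfl
    obtain ⟨φ, hφ⟩ := Module.Injective.out (f.restrictScalars R) hf
      (coeff 0 ∘ₗ g.restrictScalars R)
    refine ⟨lift φ, fun y => ext fun n => ?_⟩
    calc coeff n (lift φ (f y)) = φ ((X ^ n : R[X]) • f y) := coeff_lift φ n (f y)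
      _ = φ (f ((X ^ n : R[X]) • y)) := by rw [map_smul f]
      _ = coeff 0 (g ((X ^ n : R[X]) • y)) := hφ _
      _ = coeff n (g y) := by rw [map_smul, coeff_X_pow_smul, zero_add]

theorem mem_powTorsion_span_X_iff {a : InverseSeriesModule R M} :
    a ∈ powTorsion (Ideal.span {(X : R[X])}) (InverseSeriesModule R M) ↔
      ∃ k, ∀ n ≥ k, coeff n a = 0 := by
  rw [mem_powTorsion_span_singleton_iff]
  refine exists_congr fun k => ⟨fun hk n hn => ?_, fun hk => ext fun n => ?_⟩
  · rw [← Nat.sub_add_cancel hn, ← coeff_X_pow_smul, hk, map_zero]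
  · rw [coeff_X_pow_smul, hk _ (Nat.le_add_left k n), map_zero]

end InverseSeriesModule

namespace DividedPowersModule

variable {R M : Type*} [CommRing R] [AddCommGroup M] [Module R M]

/-- The inclusion of `M[X⁻¹]` into `M[[X⁻¹]]`. -/
noncomputable def toInverseSeries : DividedPowersModule R M →ₗ[R[X]] InverseSeriesModule R M :=
  LinearMap.ofAEval (shiftMap R M)
    ((Module.AEval'.of (LinearMap.funLeft R M Nat.succ)).toLinearMap ∘ₗ Finsupp.lcoeFun) fun a =>
      (Module.AEval'.X_smul_of (LinearMap.funLeft R M Nat.succ) a).symm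

theorem coeff_toInverseSeries_of (n : ℕ) (a : ℕ →₀ M) :
    InverseSeriesModule.coeff n (toInverseSeries (Module.AEval'.of (shiftMap R M) a)) = a n :=
  rfl

theorem toInverseSeries_injective :
    Function.Injective (toInverseSeries : DividedPowersModule R M → InverseSeriesModule R M) :=
  DFunLike.coe_injective (F := ℕ →₀ M)

theorem range_toInverseSeries :
    LinearMap.range (toInverseSeries (R := R) (M := M)) =
      powTorsion (Ideal.span {X}) (InverseSeriesModule R M) := by
  ext a
  rw [InverseSeriesModule.mem_powTorsion_span_X_iff]
  constructor
  · rintro ⟨b, rfl⟩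
    obtain ⟨b, rfl⟩ := (Module.AEval'.of (shiftMap R M)).surjective b
    obtain ⟨k, hk⟩ := b.support.exists_nat_subset_range
    refine ⟨k, fun n hn => ?_⟩
    rw [coeff_toInverseSeries_of, ← Finsupp.notMem_support_iff]
    exact fun hnb => hn.not_gt (Finset.mem_range.1 (hk hnb))
  · rintro ⟨k, hk⟩
    have support_subset : ∀ n, InverseSeriesModule.coeff n a ≠ 0 → n ∈ Finset.range k :=
      fun n hn => Finset.mem_range.2 (not_le.1 fun hkn => hn (hk n hkn))
    exact ⟨Module.AEval'.of (shiftMap R M) (Finsupp.onFinset _ _ support_subset), rfl⟩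

/-- `M[X⁻¹]` identified with the `X`-power torsion of `M[[X⁻¹]]`. -/
noncomputable def equivPowTorsion :
    DividedPowersModule R M ≃ₗ[R[X]]
      powTorsion (Ideal.span {(X : R[X])}) (InverseSeriesModule R M) :=
  (LinearEquiv.ofInjective toInverseSeries toInverseSeries_injective).trans
    (LinearEquiv.ofEq _ _ range_toInverseSeries)

/-- The inclusion of `M` into `M[X⁻¹]` in degree `0`. -/
noncomputable def const : M →ₗ[R] DividedPowersModule R M :=
  (Module.AEval'.of (shiftMap R M)).toLinearMap ∘ₗ Finsupp.lsingle 0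

theorem X_smul_const (m : M) : (X : R[X]) • (const m : DividedPowersModule R M) = 0 := by
  refine toInverseSeries_injective (InverseSeriesModule.ext fun n => ?_)
  rw [map_smul, InverseSeriesModule.coeff_X_smul, map_zero, map_zero]
  exact (coeff_toInverseSeries_of (n + 1) (Finsupp.single 0 m)).trans
    (Finsupp.single_eq_of_ne n.succ_ne_zero)

theorem smul_const (p : R[X]) (m : M) :
    p • (const m : DividedPowersModule R M) = const (aeval (0 : R) p • m) := by
  rw [smul_eq_eval_zero_smul_of_X_smul_eq_zero (X_smul_const m), map_smul, coe_aeval_eq_eval]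

/-- The degree `0` coefficient of an element of `M[X⁻¹]`. -/
noncomputable def constCoeff : DividedPowersModule R M →ₗ[R] M :=
  InverseSeriesModule.coeff 0 ∘ₗ toInverseSeries.restrictScalars R

theorem leftInverse_constCoeff_const :
    Function.LeftInverse constCoeff (const : M → DividedPowersModule R M) :=
  fun m => (coeff_toInverseSeries_of 0 (Finsupp.single 0 m)).trans Finsupp.single_eq_same

end DividedPowersModule

/-- For `R` commutative noetherian, `M` is an injective `R`-module if and only if the
module of divided powers `N = M[X⁻¹]` is an injective `R[X]`-module. -/
theorem injective_iff_dividedPowers_injective (R M : Type*) [CommRing R]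
    [IsNoetherianRing R] [AddCommGroup M] [Module R M] :
    Module.Injective R M ↔
      Module.Injective (Polynomial R) (DividedPowersModule R M) := by
  constructor
  · intro hM
    have series_injective : Module.Injective R[X] (InverseSeriesModule R M) :=
      InverseSeriesModule.injective
    let Γ := powTorsion (Ideal.span {(X : R[X])}) (InverseSeriesModule R M)
    have torsion_injective : Module.Injective R[X] Γ := injective_powTorsion _ _
    exact injective_of_linearEquiv (Q := Γ) DividedPowersModule.equivPowTorsion
  · intro hN
    exact injective_of_leftInverse_of_augmentation (aeval (0 : R)) DividedPowersModule.const
      DividedPowersModule.constCoeff DividedPowersModule.smul_const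
      DividedPowersModule.leftInverse_constCoeff_const
end

section
/- Let p be a prime and m ≥ 2, and let P_m be the ℤ[X]-module with underlying abelian group ℤ/p^mℤ × ℤ/p^{m−1}ℤ × ⋯ × ℤ/pℤ, where X acts by (X·a)(n) = p·a(n+1) for 0 ≤ n ≤ m−2 (here p·a(n+1) denotes the image of a(n+1) under the additive homomorphism ℤ/p^{m−1−n}ℤ → ℤ/p^{m−n}ℤ induced by multiplication by p on ℤ) and (X·a)(m−1) = 0. Then the intersection of all maximal ℤ[X]-submodules of P_m equals p·P_m, and this submodule equals S_{m−1}(P_m), the (m−1)-st socle series member of P_m. -/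
open Polynomial

/-!
Let `I` be an ideal of a commutative ring with semisimple quotient, and let `M` be a module killed
by a power of `I`. Semisimple subquotients of `M` are then exactly those killed by `I`, so the
intersection of the maximal submodules of `M` is `I M`, and `S_k(M)` is the annihilator of `I ^ k`
in `M`.

For `P_m` take `I = (p, X)`, with quotient `ℤ/pℤ`. As `X P_m ⊆ p P_m`, one has
`I ^ k P_m = p ^ k P_m` for all `k`. This gives the radical, and `I ^ (m - 1)` kills `p P_m` because
`p ^ m P_m = 0`. Conversely the `0`-th coordinate of `p ^ (m - 1 - l) X ^ l a` is `p ^ (m - 1) a l`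
in `ℤ/p^mℤ`, so every `a` killed by `I ^ (m - 1)` has all its coordinates divisible by `p`.
-/

section Socle

variable {R M : Type*} [Ring R] [AddCommGroup M] [Module R M]

theorem le_socle_of_isSemisimpleModule (N : Submodule R M) [IsSemisimpleModule R N] :
    N ≤ socle R M := by
  calc N = Submodule.map N.subtype (sSup {S | IsSimpleModule R S}) := by
        rw [IsSemisimpleModule.sSup_simples_eq_top, Submodule.map_subtype_top]
    _ ≤ socle R M := by
        rw [Submodule.map_le_iff_le_comap]
        refine sSup_le fun S (hS : IsSimpleModule R S) ↦ Submodule.map_le_iff_le_comap.1 ?_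
        exact le_sSup (IsSimpleModule.congr
          (Submodule.equivMapOfInjective N.subtype N.injective_subtype S).symm)

end Socle

section Loewy

variable {R M : Type*} [CommRing R] [AddCommGroup M] [Module R M] {I J : Ideal R} {n : ℕ}

theorem le_annihilator_of_pow_le_annihilator [IsSemisimpleModule R M]
    (h : I ^ n ≤ Module.annihilator R M) : I ≤ Module.annihilator R M :=
  fun _ hr ↦ IsSemisimpleModule.annihilator_isRadical M R ⟨n, h (Ideal.pow_mem_pow hr n)⟩

theorem isSemisimpleModule_of_le_annihilator [IsSemisimpleRing (R ⧸ I)]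
    (h : I ≤ Module.annihilator R M) : IsSemisimpleModule R M := by
  have hM : Module.IsTorsionBySet R M I := (Module.isTorsionBySet_iff_subset_annihilator _ _).2 h
  let := hM.module
  exact hM.isSemisimpleModule_iff.1 inferInstance

theorem socle_eq_torsionBySet [IsSemisimpleRing (R ⧸ I)] (h : I ^ n ≤ Module.annihilator R M) :
    socle R M = Submodule.torsionBySet R M I := by
  refine le_antisymm (sSup_le fun S (hS : IsSimpleModule R S) x hx ↦ ?_) ?_
  · have hI : I ≤ Module.annihilator R S := le_annihilator_of_pow_le_annihilator
      (h.trans (S.subtype.annihilator_le_of_injective S.injective_subtype))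
    rw [Submodule.mem_torsionBySet_iff]
    exact fun r ↦ congrArg Subtype.val (Module.mem_annihilator.1 (hI r.2) ⟨x, hx⟩)
  · have : IsSemisimpleModule R (Submodule.torsionBySet R M I) :=
      isSemisimpleModule_of_le_annihilator ((Module.isTorsionBySet_iff_subset_annihilator _ _).1
        (Submodule.torsionBySet_isTorsionBySet (I : Set R)))
    exact le_socle_of_isSemisimpleModule _

theorem mem_torsionBySet_mul_iff {x : M} :
    x ∈ Submodule.torsionBySet R M (I * J : Ideal R) ↔
      ∀ r ∈ J, r • x ∈ Submodule.torsionBySet R M I := by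
  calc x ∈ Submodule.torsionBySet R M (I * J : Ideal R)
      ↔ I * J ≤ Ideal.torsionOf R M x := by
        simp only [Submodule.mem_torsionBySet_iff, Subtype.forall, SetLike.mem_coe, SetLike.le_def,
          Ideal.mem_torsionOf_iff]
    _ ↔ ∀ r ∈ J, r • x ∈ Submodule.torsionBySet R M I := by
        simp only [Ideal.mul_le, Ideal.mem_torsionOf_iff, Submodule.mem_torsionBySet_iff,
          Subtype.forall, SetLike.mem_coe, mul_smul]
        exact forall₂_comm

theorem mem_socleSeries_succ_iff [IsSemisimpleRing (R ⧸ I)] (h : I ^ n ≤ Module.annihilator R M)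
    (k : ℕ) (x : M) : x ∈ socleSeries R M (k + 1) ↔ ∀ r ∈ I, r • x ∈ socleSeries R M k := by
  have hquot : I ^ n ≤ Module.annihilator R (M ⧸ socleSeries R M k) :=
    h.trans (LinearMap.annihilator_le_of_surjective _ (Submodule.mkQ_surjective _))
  simp only [socleSeries, socle_eq_torsionBySet hquot, Submodule.mem_comap,
    Submodule.mem_torsionBySet_iff, Subtype.forall, SetLike.mem_coe,
    Submodule.mkQ_apply, ← Submodule.Quotient.mk_smul, Submodule.Quotient.mk_eq_zero]

theorem socleSeries_eq_torsionBySet_pow [IsSemisimpleRing (R ⧸ I)]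
    (h : I ^ n ≤ Module.annihilator R M) (k : ℕ) :
    socleSeries R M k = Submodule.torsionBySet R M (I ^ k : Ideal R) := by
  induction k with
  | zero => rw [pow_zero, Ideal.one_eq_top, Submodule.top_coe, Submodule.torsionBySet_univ,
      socleSeries]
  | succ k ih =>
    ext x
    rw [mem_socleSeries_succ_iff h, ih, pow_succ, mem_torsionBySet_mul_iff]

theorem jacobson_eq_smul_top [IsSemisimpleRing (R ⧸ I)] (h : I ^ n ≤ Module.annihilator R M) :
    Module.jacobson R M = I • ⊤ := by
  apply le_antisymm
  · have : IsSemisimpleModule R (M ⧸ (I • ⊤ : Submodule R M)) :=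
      isSemisimpleModule_of_le_annihilator ((Module.isTorsionBySet_iff_subset_annihilator _ _).1
        (Module.isTorsionBySet_quotient_ideal_smul M I))
    exact Module.jacobson_le_of_eq_bot (IsSemisimpleModule.jacobson_eq_bot R _)
  · refine le_sInf fun S (hS : IsCoatom S) ↦ Submodule.smul_le.2 fun r hr x _ ↦ ?_
    have := isSimpleModule_iff_isCoatom.2 hS
    have hI : I ≤ Module.annihilator R (M ⧸ S) := le_annihilator_of_pow_le_annihilator
      (h.trans (S.mkQ.annihilator_le_of_surjective S.mkQ_surjective))
    exact (Submodule.Quotient.mk_eq_zero S).1 (Module.mem_annihilator.1 (hI hr) (S.mkQ x))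

theorem pow_smul_top_eq_of_smul_top_eq (h : I • (⊤ : Submodule R M) = J • ⊤) (k : ℕ) :
    I ^ k • (⊤ : Submodule R M) = J ^ k • ⊤ := by
  induction k with
  | zero => rw [pow_zero, pow_zero]
  | succ k ih =>
    calc I ^ (k + 1) • (⊤ : Submodule R M) = I ^ k • J • ⊤ := by rw [pow_succ, mul_smul, h]
      _ = J • I ^ k • ⊤ := smul_comm _ _ _
      _ = J ^ (k + 1) • ⊤ := by rw [ih, ← mul_smul, pow_succ']

theorem smul_top_le_torsionBySet (h : I * J ≤ Module.annihilator R M) :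
    J • ⊤ ≤ Submodule.torsionBySet R M I :=
  Submodule.smul_le.2 fun r hr x _ ↦ mem_torsionBySet_mul_iff.1
    ((Submodule.mem_torsionBySet_iff _ _).2 fun s ↦ Module.mem_annihilator.1 (h s.2) x) r hr

theorem mem_span_singleton_smul_top_iff {r : R} {x : M} :
    x ∈ Ideal.span {r} • (⊤ : Submodule R M) ↔ ∃ y : M, r • y = x := by
  rw [Submodule.ideal_span_singleton_smul, Submodule.mem_smul_pointwise_iff_exists]
  simp only [Submodule.mem_top, true_and]

end Loewy

/-- The ideal `(p, X)` of `ℤ[X]`. -/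
noncomputable def idealPX (p : ℕ) : Ideal ℤ[X] := Ideal.span {(p : ℤ[X]), X}

theorem natCast_mem_idealPX (p : ℕ) : (p : ℤ[X]) ∈ idealPX p :=
  Ideal.subset_span (Set.mem_insert _ _)

theorem X_mem_idealPX (p : ℕ) : X ∈ idealPX p :=
  Ideal.subset_span (Set.mem_insert_of_mem _ (Set.mem_singleton _))

theorem idealPX_eq_comap (p : ℕ) :
    idealPX p = (Ideal.span {(p : ℤ)}).comap constantCoeff := by
  have hmap : Ideal.span {(p : ℤ)} = (Ideal.span {(p : ℤ[X])}).map constantCoeff := by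
    rw [Ideal.map_span, Set.image_singleton, map_natCast]
  rw [hmap, Ideal.comap_map_of_surjective' (constantCoeff (R := ℤ)) constantCoeff_surjective,
    ker_constantCoeff, idealPX, Ideal.span_insert]

theorem isSemisimpleRing_quotient_idealPX {p : ℕ} (hp : Squarefree p) :
    IsSemisimpleRing (ℤ[X] ⧸ idealPX p) := by
  have : NeZero p := ⟨hp.ne_zero⟩
  have : IsReduced (ZMod p) := isReduced_zmod.2 (Or.inl hp)
  have := IsArtinianRing.isSemisimpleRing_of_isReduced (ZMod p)
  let residue : ℤ[X] →+* ZMod p := (Int.castRingHom (ZMod p)).comp constantCoeff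
  have hsurj : Function.Surjective residue :=
    (ZMod.ringHom_surjective (Int.castRingHom (ZMod p))).comp constantCoeff_surjective
  have hker : RingHom.ker residue = idealPX p := by
    rw [idealPX_eq_comap, ← ZMod.ker_intCastRingHom, RingHom.comap_ker]
  rw [← hker]
  exact (RingHom.quotientKerEquivOfSurjective hsurj).symm.isSemisimpleRing

theorem dvd_of_pow_mul_natCast_eq_zero {p k n a : ℕ} (hp : p ≠ 0) (hkn : k < n)
    (h : (p ^ k * a : ZMod (p ^ n)) = 0) : p ∣ a := by
  have hdvd : p ^ k * p ∣ p ^ k * a := calc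
    p ^ k * p = p ^ (k + 1) := (pow_succ p k).symm
    _ ∣ p ^ n := pow_dvd_pow p hkn
    _ ∣ p ^ k * a := (ZMod.natCast_eq_zero_iff _ _).1 (mod_cast h)
  exact Nat.dvd_of_mul_dvd_mul_left (pow_pos (Nat.pos_of_ne_zero hp) k) hdvd

theorem natCast_mul_mod_of_dvd {n a c : ℕ} (h : n ∣ a * c) (b : ℕ) :
    (a * (b % c : ℕ) : ZMod n) = a * b := by
  have hmod : a * (b % c) ≡ a * b [MOD n] := ((Nat.mod_modEq b c).mul_left' a).of_dvd h
  exact_mod_cast (ZMod.natCast_eq_natCast_iff _ _ _).2 hmod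

/-- The underlying group `ℤ/p^mℤ × ⋯ × ℤ/pℤ` of the module `P_m`. -/
abbrev Pm (p m : ℕ) : Type := (i : Fin m) → ZMod (p ^ (m - (i : ℕ)))

/-- The action of the indeterminate that makes `Pm p m` the module `P_m`. The map
`ℤ/p^(j-1)ℤ → ℤ/p^jℤ` induced by multiplication by `p` sends `c` to `p` times the representative
`c.val`. -/
def XActsByShift (p m : ℕ) [Module ℤ[X] (Pm p m)] : Prop :=
  ∀ (a : Pm p m) (n : Fin m), ((X : ℤ[X]) • a) n =
    if h : (n : ℕ) + 1 < m then
      (p : ZMod (p ^ (m - (n : ℕ)))) * (((a ⟨(n : ℕ) + 1, h⟩).val : ℕ) : ZMod (p ^ (m - (n : ℕ))))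
    else 0

namespace Pm

variable {p m : ℕ} [Module ℤ[X] (Pm p m)]

theorem natCast_smul_apply (c : ℕ) (a : Pm p m) (n : Fin m) : ((c : ℤ[X]) • a) n = c * a n := by
  rw [Nat.cast_smul_eq_nsmul, Pi.smul_apply, nsmul_eq_mul]

theorem exists_X_smul_eq (hX : XActsByShift p m) (a : Pm p m) :
    ∃ b : Pm p m, (p : ℤ[X]) • b = (X : ℤ[X]) • a := by
  refine ⟨fun n ↦ if h : (n : ℕ) + 1 < m then ((a ⟨n + 1, h⟩).val : ZMod _) else 0, ?_⟩
  ext n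
  rw [natCast_smul_apply, hX]
  split_ifs
  · rfl
  · exact mul_zero _

theorem idealPX_smul_top (hX : XActsByShift p m) :
    idealPX p • (⊤ : Submodule ℤ[X] (Pm p m)) = Ideal.span {(p : ℤ[X])} • ⊤ := by
  have hle : Ideal.span {(X : ℤ[X])} • (⊤ : Submodule ℤ[X] (Pm p m)) ≤
      Ideal.span {(p : ℤ[X])} • ⊤ := by
    intro x hx
    obtain ⟨a, rfl⟩ := mem_span_singleton_smul_top_iff.1 hx
    exact mem_span_singleton_smul_top_iff.2 (exists_X_smul_eq hX a)
  rw [idealPX, Ideal.span_insert, Submodule.sup_smul, sup_eq_left.2 hle]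

theorem idealPX_pow_le_annihilator (hX : XActsByShift p m) :
    idealPX p ^ m ≤ Module.annihilator ℤ[X] (Pm p m) := by
  rw [← Submodule.annihilator_top, Submodule.le_annihilator_iff,
    pow_smul_top_eq_of_smul_top_eq (idealPX_smul_top hX), ← Submodule.le_annihilator_iff,
    Submodule.annihilator_top, Ideal.span_singleton_pow, Ideal.span_singleton_le_iff_mem,
    Module.mem_annihilator]
  intro a
  ext n
  have hpow : ((p ^ m : ℕ) : ZMod (p ^ (m - (n : ℕ)))) = 0 :=
    (ZMod.natCast_eq_zero_iff _ _).2 (pow_dvd_pow p (Nat.sub_le m n))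
  rw [← Nat.cast_pow, natCast_smul_apply, hpow, zero_mul, Pi.zero_apply]

theorem X_pow_smul_apply [NeZero p] (hX : XActsByShift p m) (a : Pm p m) {k : ℕ} {n l : Fin m}
    (hl : (l : ℕ) = n + k) : ((X ^ k : ℤ[X]) • a) n = p ^ k * (a l).val := by
  induction k generalizing n with
  | zero =>
    obtain rfl : l = n := Fin.ext hl
    rw [pow_zero, one_smul, pow_zero, one_mul, ZMod.natCast_zmod_val]
  | succ k ih =>
    have hn : (n : ℕ) + 1 < m := by lia
    have hdvd : p ^ (m - (n : ℕ)) ∣ p * p ^ (m - (n + 1 : ℕ)) := by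
      rw [← pow_succ']
      exact pow_dvd_pow p (by lia)
    calc ((X ^ (k + 1) : ℤ[X]) • a) n
        = p * (((X ^ k : ℤ[X]) • a) ⟨n + 1, hn⟩).val := by
          rw [pow_succ', mul_smul, hX, dif_pos hn]
      _ = p * ((p ^ k * (a l).val : ℕ) : ZMod (p ^ (m - (n + 1 : ℕ)))).val := by
          rw [ih (n := ⟨n + 1, hn⟩) (by simp only; lia)]
          push_cast
          rfl
      _ = p * (p ^ k * (a l).val : ℕ) := by
          rw [ZMod.val_natCast, natCast_mul_mod_of_dvd hdvd]
      _ = p ^ (k + 1) * (a l).val := by push_cast; ring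

theorem dvd_val_of_mem_torsionBySet [NeZero p] (hX : XActsByShift p m) {a : Pm p m}
    (ha : a ∈ Submodule.torsionBySet ℤ[X] (Pm p m) (idealPX p ^ (m - 1) : Ideal ℤ[X]))
    (l : Fin m) : p ∣ (a l).val := by
  obtain ⟨k, hk⟩ : ∃ k, m - 1 = k + l := ⟨m - 1 - l, by lia⟩
  obtain ⟨z, hz⟩ : ∃ z : Fin m, (z : ℕ) = 0 := ⟨⟨0, l.pos⟩, rfl⟩
  have hmem : (p : ℤ[X]) ^ k * X ^ (l : ℕ) ∈ idealPX p ^ (m - 1) := by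
    rw [hk, pow_add]
    exact Ideal.mul_mem_mul (Ideal.pow_mem_pow (natCast_mem_idealPX p) _)
      (Ideal.pow_mem_pow (X_mem_idealPX p) _)
  refine dvd_of_pow_mul_natCast_eq_zero (NeZero.ne p) (show k + l < m - z by lia) ?_
  calc (p ^ (k + l) * (a l).val : ZMod (p ^ (m - (z : ℕ))))
      = (p ^ k : ℕ) * ((X ^ (l : ℕ) : ℤ[X]) • a) z := by
        rw [X_pow_smul_apply hX a (l := l) (by lia), ← mul_assoc, Nat.cast_pow, pow_add]
    _ = (((p : ℤ[X]) ^ k * X ^ (l : ℕ)) • a) z := by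
        rw [mul_smul, ← natCast_smul_apply, Nat.cast_pow]
    _ = 0 := by rw [(Submodule.mem_torsionBySet_iff _ _).1 ha ⟨_, hmem⟩, Pi.zero_apply]

theorem torsionBySet_idealPX_pow [NeZero p] (hm : m ≠ 0) (hX : XActsByShift p m) :
    Submodule.torsionBySet ℤ[X] (Pm p m) (idealPX p ^ (m - 1) : Ideal ℤ[X]) = idealPX p • ⊤ := by
  apply le_antisymm
  · intro a ha
    choose c hc using dvd_val_of_mem_torsionBySet hX ha
    rw [idealPX_smul_top hX, mem_span_singleton_smul_top_iff]
    refine ⟨fun l ↦ c l, ?_⟩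
    ext l
    rw [natCast_smul_apply, ← Nat.cast_mul, ← hc, ZMod.natCast_zmod_val]
  · apply smul_top_le_torsionBySet
    rw [← pow_succ, Nat.sub_add_cancel (Nat.one_le_iff_ne_zero.2 hm)]
    exact idealPX_pow_le_annihilator hX

theorem coe_idealPX_smul_top (hX : XActsByShift p m) :
    ((idealPX p • ⊤ : Submodule ℤ[X] (Pm p m)) : Set (Pm p m)) =
      {x | ∃ a : Pm p m, x = (p : ℤ) • a} := by
  ext x
  rw [idealPX_smul_top hX, SetLike.mem_coe, mem_span_singleton_smul_top_iff]
  simp only [Nat.cast_smul_eq_nsmul, Nat.cast_smul_eq_nsmul ℤ, eq_comm, Set.mem_ofPred_eq]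

end Pm

theorem radical_of_Pm_general {p m : ℕ} (hp : Squarefree p) (hm : m ≠ 0) [Module ℤ[X] (Pm p m)]
    (hX : XActsByShift p m) :
    ((sInf {S : Submodule ℤ[X] (Pm p m) | IsCoatom S} : Submodule ℤ[X] (Pm p m)) : Set (Pm p m)) =
        {x | ∃ a : Pm p m, x = (p : ℤ) • a} ∧
      sInf {S : Submodule ℤ[X] (Pm p m) | IsCoatom S} = socleSeries ℤ[X] (Pm p m) (m - 1) := by
  have : NeZero p := ⟨hp.ne_zero⟩
  have := isSemisimpleRing_quotient_idealPX hp
  have hnil := Pm.idealPX_pow_le_annihilator hX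
  have hrad : sInf {S : Submodule ℤ[X] (Pm p m) | IsCoatom S} = idealPX p • ⊤ :=
    jacobson_eq_smul_top hnil
  rw [hrad]
  refine ⟨Pm.coe_idealPX_smul_top hX, ?_⟩
  rw [socleSeries_eq_torsionBySet_pow hnil, Pm.torsionBySet_idealPX_pow hm hX]

/-- Let `P_m = ℤ/p^mℤ × ⋯ × ℤ/pℤ` be the `ℤ[X]`-module in which `X` acts by
`(X • a) n = p • a (n+1)` (push forward along multiplication by `p`) and
`(X • a) (m-1) = 0`.  The intersection of all maximal `ℤ[X]`-submodules of `P_m`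
equals `p·P_m`, and this submodule equals `S_{m-1}(P_m)`. -/
theorem radical_of_Pm (p : ℕ) (hp : p.Prime) (m : ℕ) (hm : 2 ≤ m)
    [Module (Polynomial ℤ) ((i : Fin m) → ZMod (p ^ (m - (i : ℕ))))]
    [IsScalarTower ℤ (Polynomial ℤ) ((i : Fin m) → ZMod (p ^ (m - (i : ℕ))))]
    (hX : ∀ (a : (i : Fin m) → ZMod (p ^ (m - (i : ℕ)))) (n : Fin m),
      ((X : Polynomial ℤ) • a) n =
        if h : (n : ℕ) + 1 < m then
          (p : ZMod (p ^ (m - (n : ℕ)))) *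
            (((a ⟨(n : ℕ) + 1, h⟩).val : ℕ) : ZMod (p ^ (m - (n : ℕ))))
        else 0) :
    ((sInf {S : Submodule (Polynomial ℤ) ((i : Fin m) → ZMod (p ^ (m - (i : ℕ)))) |
        IsCoatom S} : Submodule (Polynomial ℤ) ((i : Fin m) → ZMod (p ^ (m - (i : ℕ)))))
          : Set ((i : Fin m) → ZMod (p ^ (m - (i : ℕ)))))
        = {x | ∃ a : (i : Fin m) → ZMod (p ^ (m - (i : ℕ))), x = (p : ℤ) • a} ∧
    sInf {S : Submodule (Polynomial ℤ) ((i : Fin m) → ZMod (p ^ (m - (i : ℕ)))) |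
        IsCoatom S}
      = socleSeries (Polynomial ℤ) ((i : Fin m) → ZMod (p ^ (m - (i : ℕ)))) (m - 1) :=
  radical_of_Pm_general hp.prime.squarefree (by lia) hX
end

section
/- Let p be a prime and m ≥ 1, and let P_m be the ℤ[X]-module with underlying abelian group ℤ/p^mℤ × ℤ/p^{m−1}ℤ × ⋯ × ℤ/pℤ, where X acts by (X·a)(n) = p·a(n+1) for 0 ≤ n ≤ m−2 (here p·a(n+1) denotes the image of a(n+1) under the additive homomorphism ℤ/p^{m−1−n}ℤ → ℤ/p^{m−n}ℤ induced by multiplication by p on ℤ) and (X·a)(m−1) = 0. Then: (i) P_m is generated as a ℤ[X]-module by m elements but cannot be generated by m−1 elements; (ii) every proper ℤ[X]-submodule of P_m can be generated by at most m−1 elements. -/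
open Polynomial

/-! Write `ℓ` for length, `N[p]` for the `p`-torsion of `N` and `P` for `P_m`. Let `𝔪 = (p, X)`, so
that `𝔪P = pP` and some power of `𝔪` kills `P`. By Nakayama, a submodule `S` needs exactly `ℓ(S/𝔪S)`
generators, and
`ℓ(S/𝔪S) ≤ ℓ(S/pS) = ℓ(S[p]) ≤ ℓ(P[p]) = ℓ(P/pP) = ℓ(P/𝔪P) = m`,
where the equalities between quotient and torsion come from multiplication by `p` on a module of
finite length. If `S` needs `m` generators, then `P[p] ≤ S` and `XS ⊆ pS`. The standard generators
satisfy `X • e (k + 1) = p • e k` and `e m = 0`; if `e (k + 1) ∈ S`, then `p • e k = p • t` for some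
`t ∈ S`, so `e k ∈ t + P[p] ⊆ S`. By descending induction `S = P`. -/

theorem exists_finset_span_eq_iff_spanFinrank_le {R M : Type*} [Semiring R] [AddCommMonoid M]
    [Module R M] {N : Submodule R M} (hN : N.FG) {k : ℕ} :
    (∃ G : Finset M, G.card ≤ k ∧ Submodule.span R (G : Set M) = N) ↔ N.spanFinrank ≤ k := by
  constructor
  · rintro ⟨G, hG, rfl⟩
    have hle := Submodule.spanFinrank_span_le_ncard_of_finite (R := R) G.finite_toSet
    rw [Set.ncard_coe_finset] at hle
    exact hle.trans hG
  · intro hk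
    obtain ⟨G, hG, hspan⟩ := hN.exists_span_finset_card_eq_spanFinrank
    exact ⟨G, hG.trans_le hk, hspan⟩

section Length

variable {R M : Type*} [Ring R] [AddCommGroup M] [Module R M]

theorem length_quotient_range_eq_length_ker [IsArtinian R M] [IsNoetherian R M]
    (f : M →ₗ[R] M) :
    Module.length R (M ⧸ LinearMap.range f) = Module.length R (LinearMap.ker f) := by
  have h_ker := Module.length_eq_add_of_exact (LinearMap.ker f).subtype f.rangeRestrict
    (Submodule.subtype_injective _) f.surjective_rangeRestrict
    (LinearMap.exact_iff.mpr (by rw [LinearMap.ker_rangeRestrict, Submodule.range_subtype]))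
  have h_coker := Module.length_eq_add_of_exact (LinearMap.range f).subtype (LinearMap.range f).mkQ
    (Submodule.subtype_injective _) (Submodule.mkQ_surjective _)
    (LinearMap.exact_subtype_mkQ _)
  rw [h_coker, add_comm] at h_ker
  exact ENat.add_left_injective_of_ne_top Module.length_ne_top h_ker

theorem length_quotient_le_of_le {N N' : Submodule R M} (h : N ≤ N') :
    Module.length R (M ⧸ N') ≤ Module.length R (M ⧸ N) :=
  Module.length_le_of_surjective _ (Submodule.factor_surjective h)

theorem eq_of_le_of_length_quotient_le [IsArtinian R M] [IsNoetherian R M] {N N' : Submodule R M}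
    (h : N ≤ N') (hlen : Module.length R (M ⧸ N) ≤ Module.length R (M ⧸ N')) : N = N' := by
  refine h.eq_of_not_lt fun hlt => hlen.not_gt ?_
  rw [Module.length_quotient, Module.length_quotient]
  exact Order.coheight_strictAnti hlt (Order.coheight_lt_top _)

theorem eq_of_le_of_length_le [IsArtinian R M] [IsNoetherian R M] {N N' : Submodule R M}
    (h : N ≤ N') (hlen : Module.length R N' ≤ Module.length R N) : N = N' := by
  refine h.eq_of_not_lt fun hlt => hlen.not_gt ?_
  rw [Module.length_submodule, Module.length_submodule]
  exact Submodule.height_strictMono hlt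

end Length

section Nakayama

variable {R M : Type*} [CommRing R] [AddCommGroup M] [Module R M] {I : Ideal R}

theorem eq_top_of_sup_smul_top_eq_top [Module.Finite R M] {N : Submodule R M}
    (hI : I ≤ (Module.annihilator R M).jacobson) (hN : N ⊔ I • ⊤ = ⊤) : N = ⊤ := by
  by_contra hne
  have : Nontrivial (M ⧸ N) := Submodule.Quotient.nontrivial_iff.mpr hne
  have hI' : I ≤ (Module.annihilator R (M ⧸ N)).jacobson :=
    hI.trans (Ideal.jacobson_mono (N.mkQ.annihilator_le_of_surjective N.mkQ_surjective))
  refine Submodule.top_ne_ideal_smul_of_le_jacobson_annihilator hI' ?_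
  have hmap := congrArg (Submodule.map N.mkQ) hN
  rw [Submodule.map_sup, Submodule.map_smul'', Submodule.mkQ_map_self, bot_sup_eq,
    Submodule.map_top, Submodule.range_mkQ] at hmap
  exact hmap.symm

theorem spanFinrank_top_quotient_smul_top [Module.Finite R M]
    (hI : I ≤ (Module.annihilator R M).jacobson) :
    (⊤ : Submodule R (M ⧸ (I • ⊤ : Submodule R M))).spanFinrank =
      (⊤ : Submodule R M).spanFinrank := by
  classical
  set π := (I • ⊤ : Submodule R M).mkQ
  apply le_antisymm
  · simpa [π] using Submodule.spanFinrank_map_le_of_fg π (Module.Finite.fg_top (R := R) (M := M))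
  · obtain ⟨G, hcard, hspan⟩ :=
      (Module.Finite.fg_top (R := R)
        (M := M ⧸ (I • ⊤ : Submodule R M))).exists_span_finset_card_eq_spanFinrank
    obtain ⟨lift, hlift⟩ := (I • ⊤ : Submodule R M).mkQ_surjective.hasRightInverse
    rw [← hcard, ← exists_finset_span_eq_iff_spanFinrank_le Module.Finite.fg_top]
    refine ⟨G.image lift, Finset.card_image_le, eq_top_of_sup_smul_top_eq_top hI ?_⟩
    rw [sup_comm, ← Submodule.map_mkQ_eq_top, Submodule.map_span, Finset.coe_image,
      hlift.image_image, hspan]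

theorem length_eq_spanFinrank_top_of_isTorsionBySet [I.IsMaximal] [Module.Finite R M]
    (hM : Module.IsTorsionBySet R M I) :
    Module.length R M = (⊤ : Submodule R M).spanFinrank := by
  let := hM.module
  let := Ideal.Quotient.field I
  have := hM.isScalarTower (S := R)
  have : Module.Finite (R ⧸ I) M := .of_restrictScalars_finite R _ _
  have hsurj : Function.Surjective (algebraMap R (R ⧸ I)) := Ideal.Quotient.mk_surjective
  rw [Module.length_eq_of_surjective hsurj, Module.length_eq_finrank,
    Module.finrank_eq_spanFinrank_of_free, Submodule.spanFinrank,
    ← Submodule.spanRank_restrictScalars_eq hsurj, Submodule.restrictScalars_top,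
    Submodule.spanFinrank]

theorem length_quotient_smul_top_eq_spanFinrank [I.IsMaximal] [Module.Finite R M]
    (hI : I ≤ (Module.annihilator R M).jacobson) :
    Module.length R (M ⧸ (I • ⊤ : Submodule R M)) = (⊤ : Submodule R M).spanFinrank := by
  rw [length_eq_spanFinrank_top_of_isTorsionBySet
    (Module.isTorsionBySet_quotient_ideal_smul M I), spanFinrank_top_quotient_smul_top hI]

end Nakayama

section TorsionBound

open scoped Pointwise

variable {R M : Type*} [CommRing R] [AddCommGroup M] [Module R M]

theorem pointwise_smul_le_ideal_smul_of_mem {I : Ideal R} {π : R} (hπ : π ∈ I)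
    (N : Submodule R M) : π • N ≤ I • N := by
  rintro _ ⟨x, hx, rfl⟩
  exact Submodule.smul_mem_smul hπ hx

theorem le_radical_annihilator_of_smul_top_le {I : Ideal R} {π : R}
    (hπ : π ∈ (Module.annihilator R M).radical)
    (hI : (I • ⊤ : Submodule R M) ≤ π • ⊤) : I ≤ (Module.annihilator R M).radical := by
  intro x hx
  have hpow (k : ℕ) (a : M) : ∃ b : M, x ^ k • a = π ^ k • b := by
    induction k generalizing a with
    | zero => exact ⟨a, by simp only [pow_zero]⟩
    | succ k ih =>
      obtain ⟨b, -, hb : π • b = x • a⟩ :=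
        hI (Submodule.smul_mem_smul hx (Submodule.mem_top (x := a)))
      obtain ⟨c, hc⟩ := ih b
      exact ⟨c, by rw [pow_succ, mul_smul, ← hb, smul_comm, hc, smul_smul, ← pow_succ']⟩
  obtain ⟨n, hn⟩ := hπ
  refine ⟨n, Module.mem_annihilator.mpr fun a => ?_⟩
  obtain ⟨b, hb⟩ := hpow n a
  rw [hb, Module.mem_annihilator.mp hn]

theorem length_torsionBy_submodule (π : R) (S : Submodule R M) :
    Module.length R (Submodule.torsionBy R S π) =
      Module.length R (S ⊓ Submodule.torsionBy R M π : Submodule R M) := by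
  have hcomap : Submodule.torsionBy R S π = (Submodule.torsionBy R M π).comap S.subtype := by
    ext x
    simp [← Subtype.val_inj]
  rw [← Submodule.map_comap_subtype, ← hcomap]
  exact (Submodule.equivMapOfInjective _ S.subtype_injective _).length_eq

variable [IsArtinian R M] [IsNoetherian R M] {I : Ideal R} {π : R}

theorem length_quotient_pointwise_smul_top_eq_length_torsionBy (π : R) :
    Module.length R (M ⧸ (π • ⊤ : Submodule R M)) =
      Module.length R (Submodule.torsionBy R M π) := by
  have hrange : (π • ⊤ : Submodule R M) = LinearMap.range (DistribSMul.toLinearMap R M π) :=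
    Submodule.map_top _
  rw [hrange]
  exact length_quotient_range_eq_length_ker _

theorem spanFinrank_top_le_length_torsionBy [I.IsMaximal] (hπ : π ∈ I)
    (hI : I ≤ (Module.annihilator R M).jacobson) :
    (⊤ : Submodule R M).spanFinrank ≤ Module.length R (Submodule.torsionBy R M π) := by
  rw [← length_quotient_smul_top_eq_spanFinrank hI,
    ← length_quotient_pointwise_smul_top_eq_length_torsionBy]
  exact length_quotient_le_of_le (pointwise_smul_le_ideal_smul_of_mem hπ ⊤)

theorem spanFinrank_top_eq_length_torsionBy_iff [I.IsMaximal] (hπ : π ∈ I)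
    (hI : I ≤ (Module.annihilator R M).jacobson) :
    (⊤ : Submodule R M).spanFinrank = Module.length R (Submodule.torsionBy R M π) ↔
      (I • ⊤ : Submodule R M) = π • ⊤ := by
  rw [← length_quotient_smul_top_eq_spanFinrank hI,
    ← length_quotient_pointwise_smul_top_eq_length_torsionBy]
  constructor
  · intro h
    exact (eq_of_le_of_length_quotient_le (pointwise_smul_le_ideal_smul_of_mem hπ ⊤) h.ge).symm
  · intro h
    rw [h]

theorem torsionBy_le_and_smul_eq_of_spanFinrank_top_le [I.IsMaximal] (hπ : π ∈ I)
    (hI : I ≤ (Module.annihilator R M).jacobson) (htop : (I • ⊤ : Submodule R M) = π • ⊤)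
    {S : Submodule R M} (hS : (⊤ : Submodule R M).spanFinrank ≤ S.spanFinrank) :
    Submodule.torsionBy R M π ≤ S ∧ I • S = π • S := by
  have hIS : I ≤ (Module.annihilator R S).jacobson :=
    hI.trans (Ideal.jacobson_mono (S.subtype.annihilator_le_of_injective S.subtype_injective))
  have hlower : Module.length R (Submodule.torsionBy R M π) ≤ (⊤ : Submodule R S).spanFinrank := by
    rw [← (spanFinrank_top_eq_length_torsionBy_iff hπ hI).mpr htop, Submodule.spanFinrank_top]
    exact_mod_cast hS
  have hupper := spanFinrank_top_le_length_torsionBy (M := S) hπ hIS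
  have hinf : S ⊓ Submodule.torsionBy R M π = Submodule.torsionBy R M π :=
    eq_of_le_of_length_le inf_le_right
      (hlower.trans (hupper.trans_eq (length_torsionBy_submodule π S)))
  have hsmul : (I • ⊤ : Submodule R S) = π • ⊤ := by
    refine (spanFinrank_top_eq_length_torsionBy_iff hπ hIS).mp (hupper.antisymm ?_)
    rwa [length_torsionBy_submodule, hinf]
  refine ⟨inf_eq_right.mp hinf, ?_⟩
  simpa [Submodule.map_smul'', Submodule.map_pointwise_smul] using
    congrArg (Submodule.map S.subtype) hsmul

end TorsionBound

section ConstantCoeff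

open scoped Pointwise

variable {p : ℕ} {M : Type*} [AddCommGroup M] [Module ℤ[X] M]

/-- The reduction `ℤ[X] → ℤ/pℤ` of the constant coefficient; for `p` prime its kernel is the maximal
ideal `(p, X)`. -/
noncomputable def constantCoeffMod (p : ℕ) : ℤ[X] →+* ZMod p :=
  (Int.castRingHom (ZMod p)).comp constantCoeff

theorem constantCoeffMod_surjective (p : ℕ) : Function.Surjective (constantCoeffMod p) :=
  (ZMod.intCast_surjective (n := p)).comp constantCoeff_surjective

instance ker_constantCoeffMod_isMaximal [Fact p.Prime] :
    (RingHom.ker (constantCoeffMod p)).IsMaximal :=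
  RingHom.ker_isMaximal_of_surjective _ (constantCoeffMod_surjective p)

theorem natCast_mem_ker_constantCoeffMod (p : ℕ) :
    (p : ℤ[X]) ∈ RingHom.ker (constantCoeffMod p) := by
  rw [RingHom.mem_ker, map_natCast, CharP.cast_eq_zero]

theorem X_mem_ker_constantCoeffMod (p : ℕ) :
    (X : ℤ[X]) ∈ RingHom.ker (constantCoeffMod p) := by
  simp [RingHom.mem_ker, constantCoeffMod]

theorem ker_constantCoeffMod_smul_top_eq
    (hX : ∀ a : M, (X : ℤ[X]) • a ∈ (p : ℤ[X]) • (⊤ : Submodule ℤ[X] M)) :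
    (RingHom.ker (constantCoeffMod p) • ⊤ : Submodule ℤ[X] M) = (p : ℤ[X]) • ⊤ := by
  refine le_antisymm (Submodule.smul_le.mpr fun q hq a _ => ?_)
    (pointwise_smul_le_ideal_smul_of_mem (natCast_mem_ker_constantCoeffMod p) ⊤)
  obtain ⟨c, hc⟩ := (ZMod.intCast_zmod_eq_zero_iff_dvd _ p).mp hq
  have hsplit : q • a = (X : ℤ[X]) • q.divX • a + (p : ℤ[X]) • (C c : ℤ[X]) • a := by
    conv_lhs => rw [← q.X_mul_divX_add, ← constantCoeff_apply, hc]
    simp only [add_smul, mul_smul, map_mul, map_natCast]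
  rw [hsplit]
  exact add_mem (hX _) (Submodule.smul_mem_pointwise_smul _ _ _ Submodule.mem_top)

theorem map_smul_eq_constantCoeffMod_smul {V : Type*} [AddCommGroup V] [Module (ZMod p) V]
    (hX : ∀ a : M, (X : ℤ[X]) • a ∈ (p : ℤ[X]) • (⊤ : Submodule ℤ[X] M))
    (f : M →+ V) (q : ℤ[X]) (a : M) : f (q • a) = constantCoeffMod p q • f a := by
  have hker : q - (q.coeff 0 : ℤ[X]) ∈ RingHom.ker (constantCoeffMod p) := by
    simp [RingHom.mem_ker, constantCoeffMod]
  obtain ⟨b, -, hb : (p : ℤ[X]) • b = (q - (q.coeff 0 : ℤ[X])) • a⟩ :=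
    (ker_constantCoeffMod_smul_top_eq hX).le (Submodule.smul_mem_smul hker Submodule.mem_top)
  have hfb : f ((p : ℤ[X]) • b) = 0 := by
    rw [Nat.cast_smul_eq_nsmul, map_nsmul, ← Nat.cast_smul_eq_nsmul (ZMod p), CharP.cast_eq_zero,
      zero_smul]
  rw [hb, sub_smul, map_sub, sub_eq_zero, Int.cast_smul_eq_zsmul, map_zsmul] at hfb
  rw [hfb, ← Int.cast_smul_eq_zsmul (ZMod p)]
  rfl

theorem finrank_le_spanFinrank_top_of_surjective [Fact p.Prime] [Module.Finite ℤ[X] M]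
    {V : Type*} [AddCommGroup V] [Module (ZMod p) V]
    (hX : ∀ a : M, (X : ℤ[X]) • a ∈ (p : ℤ[X]) • (⊤ : Submodule ℤ[X] M))
    {f : M →+ V} (hf : Function.Surjective f) :
    Module.finrank (ZMod p) V ≤ (⊤ : Submodule ℤ[X] M).spanFinrank := by
  have : RingHomSurjective (constantCoeffMod p) := ⟨constantCoeffMod_surjective p⟩
  let g : M →ₛₗ[constantCoeffMod p] V :=
    { f with map_smul' := map_smul_eq_constantCoeffMod_smul hX f }
  have hg : Submodule.map g ⊤ = ⊤ := by
    rw [Submodule.map_top, LinearMap.range_eq_top]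
    exact hf
  rw [Module.finrank_eq_spanFinrank_of_free, ← hg]
  exact Submodule.spanFinrank_map_le_of_fg g Module.Finite.fg_top

end ConstantCoeff

namespace Pm

variable {p m : ℕ}

/-- The generator of the `k`-th cyclic factor of `Pm p m`. It is indexed by all `k : ℕ` and vanishes
for `m ≤ k`, so that `X • gen (k + 1) = p • gen k` holds for every `k`. -/
def gen (p m k : ℕ) : Pm p m := fun i => if (i : ℕ) = k then 1 else 0

theorem gen_self (p m : ℕ) : gen p m m = 0 :=
  funext fun i => if_neg i.isLt.ne

theorem sum_val_smul_gen [NeZero p] (a : Pm p m) : ∑ k : Fin m, (a k).val • gen p m k = a := by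
  funext i
  simp [gen, Finset.sum_apply, Fin.val_inj, -ZMod.natCast_val, ZMod.natCast_zmod_val]

theorem pow_smul_eq_zero (a : Pm p m) : p ^ m • a = 0 := by
  funext i
  rw [Pi.smul_apply, nsmul_eq_mul,
    (ZMod.natCast_eq_zero_iff _ _).mpr (pow_dvd_pow p (Nat.sub_le m i)), zero_mul, Pi.zero_apply]

/-- Coordinatewise reduction modulo `p`; the dimension of its target bounds the number of generators
of `Pm p m` from below. -/
def reduction (p m : ℕ) : Pm p m →+ (Fin m → ZMod p) where
  toFun a i := ZMod.castHom (dvd_pow_self p (Nat.sub_ne_zero_of_lt i.isLt)) (ZMod p) (a i)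
  map_zero' := by funext i; simp only [Pi.zero_apply, map_zero]
  map_add' a b := by funext i; simp only [Pi.add_apply, map_add]

theorem reduction_surjective (p m : ℕ) : Function.Surjective (reduction p m) :=
  Function.Surjective.piMap fun i =>
    ZMod.castHom_surjective (dvd_pow_self p (Nat.sub_ne_zero_of_lt i.isLt))

section XAction

open scoped Pointwise

variable [Module ℤ[X] (Pm p m)]

theorem eq_top_of_forall_gen_mem [NeZero p] {S : Submodule ℤ[X] (Pm p m)}
    (hS : ∀ k < m, gen p m k ∈ S) : S = ⊤ := by
  refine eq_top_iff.mpr fun a _ => ?_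
  rw [← sum_val_smul_gen a]
  exact sum_mem fun k _ => nsmul_mem (hS k k.isLt) _

theorem spanFinrank_top_le [NeZero p] : (⊤ : Submodule ℤ[X] (Pm p m)).spanFinrank ≤ m := by
  classical
  rw [← exists_finset_span_eq_iff_spanFinrank_le Module.Finite.fg_top]
  refine ⟨(Finset.range m).image (gen p m), Finset.card_image_le.trans_eq (Finset.card_range m), ?_⟩
  exact eq_top_of_forall_gen_mem fun k hk => Submodule.subset_span
    (Finset.mem_image_of_mem _ (Finset.mem_range.mpr hk))

variable (hX : ∀ (a : Pm p m) (n : Fin m), ((X : ℤ[X]) • a) n =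
  if h : (n : ℕ) + 1 < m then
    (p : ZMod (p ^ (m - (n : ℕ)))) *
      (((a ⟨(n : ℕ) + 1, h⟩).val : ℕ) : ZMod (p ^ (m - (n : ℕ))))
  else 0)

include hX

theorem X_smul_mem (a : Pm p m) : (X : ℤ[X]) • a ∈ (p : ℤ[X]) • (⊤ : Submodule ℤ[X] (Pm p m)) := by
  let b : Pm p m := fun n => if h : (n : ℕ) + 1 < m then ((a ⟨n + 1, h⟩).val : ZMod _) else 0
  refine ⟨b, Submodule.mem_top, ?_⟩
  funext n
  rw [hX, DistribSMul.toLinearMap_apply, Nat.cast_smul_eq_nsmul, Pi.smul_apply, nsmul_eq_mul]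
  dsimp only [b]
  split_ifs
  · rfl
  · rw [mul_zero]

theorem X_smul_gen_succ (hp : 1 < p) (k : ℕ) :
    (X : ℤ[X]) • gen p m (k + 1) = (p : ℤ[X]) • gen p m k := by
  funext n
  rw [hX, Nat.cast_smul_eq_nsmul, Pi.smul_apply, nsmul_eq_mul]
  by_cases hn : (n : ℕ) + 1 < m
  · have : Fact (1 < p ^ (m - ((n : ℕ) + 1))) := ⟨Nat.one_lt_pow (by lia) hp⟩
    rw [dif_pos hn]
    congr 1
    simp only [gen, Nat.add_right_cancel_iff]
    split_ifs
    · rw [ZMod.val_one, Nat.cast_one]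
    · rw [ZMod.val_zero, Nat.cast_zero]
  · have hp_zero : (p : ZMod (p ^ (m - (n : ℕ)))) = 0 :=
      (ZMod.natCast_eq_zero_iff _ _).mpr (by rw [show m - (n : ℕ) = 1 by lia, pow_one])
    rw [dif_neg hn, hp_zero, zero_mul]

theorem eq_top_of_torsionBy_le (hp : 1 < p) {S : Submodule ℤ[X] (Pm p m)}
    (htorsion : Submodule.torsionBy ℤ[X] (Pm p m) (p : ℤ[X]) ≤ S)
    (hXS : ∀ s ∈ S, (X : ℤ[X]) • s ∈ (p : ℤ[X]) • S) : S = ⊤ := by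
  have : NeZero p := ⟨by lia⟩
  suffices h : ∀ k ≤ m, gen p m k ∈ S from eq_top_of_forall_gen_mem fun k hk => h k hk.le
  intro k hk
  induction hk using Nat.decreasingInduction with
  | self =>
    rw [gen_self]
    exact S.zero_mem
  | of_succ k _ ih =>
    obtain ⟨t, ht, hpt : (p : ℤ[X]) • t = X • gen p m (k + 1)⟩ := hXS _ ih
    have hdiff : gen p m k - t ∈ Submodule.torsionBy ℤ[X] (Pm p m) (p : ℤ[X]) := by
      rw [Submodule.mem_torsionBy_iff, smul_sub, hpt, X_smul_gen_succ hX hp, sub_self]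
    rw [← sub_add_cancel (gen p m k) t]
    exact add_mem (htorsion hdiff) ht

theorem ker_constantCoeffMod_le_jacobson_annihilator :
    RingHom.ker (constantCoeffMod p) ≤ (Module.annihilator ℤ[X] (Pm p m)).jacobson := by
  refine le_trans ?_ Ideal.radical_le_jacobson
  refine le_radical_annihilator_of_smul_top_le (π := (p : ℤ[X])) ⟨m, ?_⟩
    (ker_constantCoeffMod_smul_top_eq (X_smul_mem hX)).le
  refine Module.mem_annihilator.mpr fun a => ?_
  rw [← Nat.cast_pow, Nat.cast_smul_eq_nsmul, pow_smul_eq_zero]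

theorem spanFinrank_top [Fact p.Prime] : (⊤ : Submodule ℤ[X] (Pm p m)).spanFinrank = m := by
  refine spanFinrank_top_le.antisymm ?_
  exact (Module.finrank_fin_fun (ZMod p)).symm.trans_le
    (finrank_le_spanFinrank_top_of_surjective (X_smul_mem hX) (reduction_surjective p m))

theorem spanFinrank_lt_of_ne_top [hp : Fact p.Prime] {S : Submodule ℤ[X] (Pm p m)} (hS : S ≠ ⊤) :
    S.spanFinrank < m := by
  by_contra! hle
  have : IsArtinian ℤ[X] (Pm p m) := isArtinian_of_finite
  obtain ⟨htorsion, hsmul⟩ := torsionBy_le_and_smul_eq_of_spanFinrank_top_le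
    (natCast_mem_ker_constantCoeffMod p) (ker_constantCoeffMod_le_jacobson_annihilator hX)
    (ker_constantCoeffMod_smul_top_eq (X_smul_mem hX)) ((spanFinrank_top hX).trans_le hle)
  exact hS (eq_top_of_torsionBy_le hX hp.out.one_lt htorsion fun s hs =>
    hsmul.le (Submodule.smul_mem_smul (X_mem_ker_constantCoeffMod p) hs))

end XAction

end Pm

/-- Let `P_m = ℤ/p^mℤ × ⋯ × ℤ/pℤ` be the `ℤ[X]`-module in which `X` acts by
`(X • a) n = p • a (n+1)` (push forward along multiplication by `p`) and
`(X • a) (m-1) = 0`.  Then: (i) `P_m` is generated by `m` elements but not by `m − 1`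
elements; (ii) every proper `ℤ[X]`-submodule of `P_m` is generated by at most `m − 1`
elements. -/
theorem generators_of_Pm (p : ℕ) (hp : p.Prime) (m : ℕ) (hm : 1 ≤ m)
    [Module (Polynomial ℤ) ((i : Fin m) → ZMod (p ^ (m - (i : ℕ))))]
    [IsScalarTower ℤ (Polynomial ℤ) ((i : Fin m) → ZMod (p ^ (m - (i : ℕ))))]
    (hX : ∀ (a : (i : Fin m) → ZMod (p ^ (m - (i : ℕ)))) (n : Fin m),
      ((X : Polynomial ℤ) • a) n =
        if h : (n : ℕ) + 1 < m then
          (p : ZMod (p ^ (m - (n : ℕ)))) *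
            (((a ⟨(n : ℕ) + 1, h⟩).val : ℕ) : ZMod (p ^ (m - (n : ℕ))))
        else 0) :
    ((∃ G : Finset ((i : Fin m) → ZMod (p ^ (m - (i : ℕ)))), G.card ≤ m ∧
        Submodule.span (Polynomial ℤ) (G : Set ((i : Fin m) → ZMod (p ^ (m - (i : ℕ)))))
          = ⊤) ∧
      ¬ (∃ G : Finset ((i : Fin m) → ZMod (p ^ (m - (i : ℕ)))), G.card ≤ m - 1 ∧
        Submodule.span (Polynomial ℤ) (G : Set ((i : Fin m) → ZMod (p ^ (m - (i : ℕ)))))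
          = ⊤)) ∧
    (∀ S : Submodule (Polynomial ℤ) ((i : Fin m) → ZMod (p ^ (m - (i : ℕ)))),
      S ≠ ⊤ →
        ∃ G : Finset ((i : Fin m) → ZMod (p ^ (m - (i : ℕ)))), G.card ≤ m - 1 ∧
          Submodule.span (Polynomial ℤ) (G : Set ((i : Fin m) → ZMod (p ^ (m - (i : ℕ)))))
            = S) := by
  have : Fact p.Prime := ⟨hp⟩
  have hfg (S : Submodule ℤ[X] (Pm p m)) : S.FG := IsNoetherian.noetherian S
  rw [exists_finset_span_eq_iff_spanFinrank_le (hfg ⊤),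
    exists_finset_span_eq_iff_spanFinrank_le (hfg ⊤), Pm.spanFinrank_top hX]
  refine ⟨⟨le_rfl, by lia⟩, fun S hS => ?_⟩
  rw [exists_finset_span_eq_iff_spanFinrank_le (hfg S)]
  exact Nat.le_sub_one_of_lt (Pm.spanFinrank_lt_of_ne_top hX hS)
end

section
/- Let p be a prime and let Q be a ℤ[X]-module that is cocyclic with socle isomorphic to ℤ[X]/(p, X) (the simple ℤ[X]-module on which p and X act as zero) and with |Q| = p⁶. Then Q can be generated by at most three elements, and if Q cannot be generated by two elements then Q is isomorphic to P₃, the ℤ[X]-module with underlying abelian group ℤ/p³ℤ × ℤ/p²ℤ × ℤ/pℤ on which X acts by X·(a₀,a₁,a₂) = (p·a₁, p·a₂, 0) (where p·a₁ and p·a₂ denote the images of a₁ and a₂ under the additive homomorphisms ℤ/p²ℤ → ℤ/p³ℤ and ℤ/pℤ → ℤ/p²ℤ induced by multiplication by p on ℤ). -/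
open Polynomial

/-!
A finite cocyclic module `M` over a commutative ring `R` carries a character `ψ : M → ℚ/ℤ` whose
kernel contains no nonzero submodule, and the pairing `(r, x) ↦ ψ (r x)` identifies `M` with the
Pontryagin dual of the cyclic module `R ⧸ Ann M`.  So `M` is determined by `Ann M`, and two finite
cocyclic modules of the same cardinality are isomorphic as soon as `Ann M ≤ Ann N`.

Let `R ⧸ 𝔪` be the socle, `𝔪 = (ℓ, r)`.  If `r ^ k` kills every element killed by `ℓ`, then
`|M/𝔪M| ≤ |M/ℓM| = |ker ℓ| ≤ |R/𝔪| ^ k`, so `M` is generated by `k` elements by Nakayama's lemma.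
Otherwise some `x` with `ℓ x = 0` and `r ^ k x ≠ 0` forces `Ann M ≤ (ℓ, r ^ (k + 1))`.

If `Q` is not generated by two elements, applying this to the pairs `(X, p)`, `(X - p, p)` and
`(p, X)` gives `Ann Q ≤ (X, p³) ∩ (X - p, p³) ∩ (p, X³) ≤ (p, X)³ ≤ Ann P₃`, hence `Q ≃ P₃`.
Then `X³` kills `Q`, so `Q` is generated by three elements.
-/

section CharacterModule

/-- The character `x ↦ exp (2πix)` of `ℚ/ℤ`, comparing `ℚ/ℤ`-valued with complex characters. -/
noncomputable def ratCircleAddChar : AddChar (AddCircle (1 : ℚ)) Circle where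
  toFun x := AddCircle.toCircle (QuotientAddGroup.map (AddSubgroup.zmultiples (1 : ℚ))
    (AddSubgroup.zmultiples (1 : ℝ)) (Rat.castHom ℝ).toAddMonoidHom (by simp) x)
  map_zero_eq_one' := by simp
  map_add_eq_mul' x y := by rw [map_add, AddCircle.toCircle_add]

theorem ratCircleAddChar_injective : Function.Injective ratCircleAddChar := by
  refine (AddCircle.injective_toCircle one_ne_zero).comp
    ((injective_iff_map_eq_zero _).2 fun x hx => ?_)
  induction x using QuotientAddGroup.induction_on with | H x => ?_
  obtain ⟨n, hn⟩ := (AddCircle.coe_eq_zero_iff (1 : ℝ)).1 hx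
  refine (AddCircle.coe_eq_zero_iff 1).2 ⟨n, ?_⟩
  rw [zsmul_one] at hn ⊢
  exact_mod_cast (show (n : ℝ) = (x : ℝ) from hn)

theorem characterModule_toAddChar_injective (A : Type*) [AddCommGroup A] [Finite A] :
    Function.Injective fun c : CharacterModule A =>
      AddChar.circleEquivComplex (ratCircleAddChar.compAddMonoidHom c) :=
  AddChar.circleEquivComplex.injective.comp
    (AddChar.compAddMonoidHom_injective_right _ ratCircleAddChar_injective)

instance finite_characterModule (A : Type*) [AddCommGroup A] [Finite A] :
    Finite (CharacterModule A) :=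
  .of_injective _ (characterModule_toAddChar_injective A)

theorem card_characterModule_le (A : Type*) [AddCommGroup A] [Finite A] :
    Nat.card (CharacterModule A) ≤ Nat.card A := by
  have := Fintype.ofFinite A
  calc Nat.card (CharacterModule A)
      ≤ Nat.card (AddChar A ℂ) :=
        Nat.card_le_card_of_injective _ (characterModule_toAddChar_injective A)
    _ = Nat.card A := by rw [Nat.card_eq_fintype_card, AddChar.card_eq, Nat.card_eq_fintype_card]

/-- The character `a ↦ a / n` of `ℤ/nℤ`. -/
noncomputable def zmodCharacter (n : ℕ) : CharacterModule (ZMod n) :=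
  ZMod.lift n ⟨CharacterModule.int.divByNat n, CharacterModule.int.divByNat_self n⟩

theorem zmodCharacter_injective (n : ℕ) [NeZero n] : Function.Injective (zmodCharacter n) := by
  refine (ZMod.lift_injective _).2 fun m hm => ?_
  obtain ⟨k, hk⟩ := (AddCircle.coe_eq_zero_iff (1 : ℚ)).1 hm
  have hmk : (m : ℚ) = n * k := by
    rw [zsmul_one] at hk
    rw [hk]
    change (m : ℚ) = n * (m • (n : ℚ)⁻¹)
    rw [zsmul_eq_mul]
    field_simp [NeZero.ne n]
  exact (ZMod.intCast_zmod_eq_zero_iff_dvd m n).2 ⟨k, by exact_mod_cast hmk⟩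

variable {R A B : Type*} [CommRing R] [AddCommGroup A] [Module R A] [AddCommGroup B] [Module R B]

/-- The transpose `b ↦ (a ↦ β a b)` of a balanced pairing `β` with values in `ℚ/ℤ`. -/
def dualFlip (β : A →ₗ[R] CharacterModule B) : B →ₗ[R] CharacterModule A where
  toFun := β.toAddMonoidHom.flip
  map_add' := map_add _
  map_smul' r b := by
    refine DFunLike.ext _ _ fun a => ?_
    change β a (r • b) = β (r • a) b
    exact (DFunLike.congr_fun (map_smul β r a) b).symm

theorem dualFlip_apply (β : A →ₗ[R] CharacterModule B) (a : A) (b : B) :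
    dualFlip β b a = β a b := rfl

theorem card_eq_of_injective_of_dualFlip_injective [Finite B] {β : A →ₗ[R] CharacterModule B}
    (hβ : Function.Injective β) (hβ' : Function.Injective (dualFlip β)) :
    Nat.card A = Nat.card B := by
  have : Finite A := .of_injective β hβ
  exact ((Nat.card_le_card_of_injective _ hβ).trans (card_characterModule_le B)).antisymm
    ((Nat.card_le_card_of_injective _ hβ').trans (card_characterModule_le A))

theorem dualFlip_bijective [Finite B] {β : A →ₗ[R] CharacterModule B}
    (hβ : Function.Injective β) (hβ' : Function.Injective (dualFlip β)) :
    Function.Bijective (dualFlip β) := by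
  have : Finite A := .of_injective β hβ
  exact hβ'.bijective_of_nat_card_le <| (card_characterModule_le A).trans
    (card_eq_of_injective_of_dualFlip_injective hβ hβ').le

end CharacterModule

section Separating

variable {R M N : Type*} [CommRing R] [AddCommGroup M] [Module R M] [AddCommGroup N] [Module R N]

variable (R) in
/-- A character of an `R`-module is separating if its kernel contains no nonzero submodule. -/
def IsSeparating (ψ : CharacterModule M) : Prop :=
  ∀ x : M, (∀ r : R, ψ (r • x) = 0) → x = 0

theorem exists_isSeparating_of_isLeast {S : Submodule R M}
    (hS : IsLeast {T : Submodule R M | T ≠ ⊥} S) : ∃ ψ : CharacterModule M, IsSeparating R ψ := by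
  obtain ⟨s, hs, hs0⟩ := Submodule.exists_mem_ne_zero_of_ne_bot hS.1
  obtain ⟨ψ, hψ⟩ := CharacterModule.exists_character_apply_ne_zero_of_ne_zero hs0
  refine ⟨ψ, fun x hx => by_contra fun hx0 => hψ ?_⟩
  obtain ⟨r, rfl⟩ := Submodule.mem_span_singleton.1
    (hS.2 (Submodule.span_singleton_eq_bot.not.2 hx0) hs)
  exact hx r

theorem annihilator_le_torsionOf_character (ψ : CharacterModule M) :
    Module.annihilator R M ≤ Ideal.torsionOf R (CharacterModule M) ψ := fun r hr =>
  DFunLike.ext _ _ fun x => by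
    change ψ (r • x) = 0
    rw [Module.mem_annihilator.1 hr, map_zero]

variable (R) in
/-- The map `r ↦ r • ψ` from `R ⧸ Ann M` to the dual of `M`. -/
def smulCharacter (ψ : CharacterModule M) :
    R ⧸ Module.annihilator R M →ₗ[R] CharacterModule M :=
  Submodule.liftQ _ (LinearMap.toSpanSingleton R _ ψ) (annihilator_le_torsionOf_character ψ)

theorem smulCharacter_mk (ψ : CharacterModule M) (r : R) (x : M) :
    smulCharacter R ψ (Submodule.Quotient.mk r) x = ψ (r • x) := rfl

namespace IsSeparating

variable {ψ : CharacterModule M} {χ : CharacterModule N}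

theorem torsionOf_eq (hψ : IsSeparating R ψ) :
    Ideal.torsionOf R (CharacterModule M) ψ = Module.annihilator R M := by
  refine le_antisymm (fun r hr => Module.mem_annihilator.2 fun x => hψ _ fun t => ?_)
    (annihilator_le_torsionOf_character ψ)
  rw [smul_comm, ← CharacterModule.smul_apply, (Ideal.mem_torsionOf_iff ψ r).1 hr]
  rfl

theorem smulCharacter_injective (hψ : IsSeparating R ψ) :
    Function.Injective (smulCharacter R ψ) :=
  LinearMap.ker_eq_bot.1 (Submodule.ker_liftQ_eq_bot _ _ _ hψ.torsionOf_eq.le)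

theorem dualFlip_smulCharacter_injective (hψ : IsSeparating R ψ) :
    Function.Injective (dualFlip (smulCharacter R ψ)) :=
  (injective_iff_map_eq_zero _).2 fun x hx => hψ x fun r => by
    rw [← smulCharacter_mk, ← dualFlip_apply, hx]
    rfl

theorem card_quotient_annihilator [Finite M] (hψ : IsSeparating R ψ) :
    Nat.card (R ⧸ Module.annihilator R M) = Nat.card M :=
  card_eq_of_injective_of_dualFlip_injective hψ.smulCharacter_injective
    hψ.dualFlip_smulCharacter_injective

/-- A finite module `M` with a separating character is dual to the cyclic module `R ⧸ Ann M`. -/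
noncomputable def equivDual [Finite M] (hψ : IsSeparating R ψ) :
    M ≃ₗ[R] CharacterModule (R ⧸ Module.annihilator R M) :=
  .ofBijective _ <|
    dualFlip_bijective hψ.smulCharacter_injective hψ.dualFlip_smulCharacter_injective

theorem nonempty_linearEquiv_of_annihilator_eq [Finite M] [Finite N] (hψ : IsSeparating R ψ)
    (hχ : IsSeparating R χ) (h : Module.annihilator R M = Module.annihilator R N) :
    Nonempty (M ≃ₗ[R] N) :=
  ⟨hψ.equivDual ≪≫ₗ CharacterModule.congr (Submodule.quotEquivOfEq _ _ h) ≪≫ₗ hχ.equivDual.symm⟩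

theorem nonempty_linearEquiv_of_annihilator_le [Finite M] [Finite N] (hψ : IsSeparating R ψ)
    (hχ : IsSeparating R χ) (hle : Module.annihilator R M ≤ Module.annihilator R N)
    (hcard : Nat.card M = Nat.card N) : Nonempty (M ≃ₗ[R] N) := by
  refine hψ.nonempty_linearEquiv_of_annihilator_eq hχ (hle.antisymm ?_)
  have : Finite (R ⧸ Module.annihilator R M) := .of_injective _ hψ.smulCharacter_injective
  have hbij := (Ideal.Quotient.factor_surjective hle).bijective_of_nat_card_le <| by
    rw [hψ.card_quotient_annihilator, hχ.card_quotient_annihilator, hcard]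
  intro r hr
  rw [← Ideal.Quotient.eq_zero_iff_mem] at hr ⊢
  exact hbij.1 (by rw [Ideal.Quotient.factor_mk, hr, map_zero])

end IsSeparating

end Separating

section Generators

variable {R M : Type*} [CommRing R] [AddCommGroup M] [Module R M]

variable (R M) in
/-- `M` can be generated by `k` elements as an `R`-module. -/
def CanBeGeneratedBy (k : ℕ) : Prop :=
  ∃ G : Finset M, G.card ≤ k ∧ Submodule.span R (G : Set M) = ⊤

theorem eq_top_of_sup_smul_top_eq_top_s18 [Module.Finite R M] {m : Ideal R}
    (hm : m ≤ (Module.annihilator R M).radical) {T : Submodule R M} (hT : T ⊔ m • ⊤ = ⊤) :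
    T = ⊤ := by
  by_contra hne
  have : Nontrivial (M ⧸ T) := Submodule.Quotient.nontrivial_iff.2 hne
  have hm' : m ≤ (Module.annihilator R (M ⧸ T)).jacobson :=
    hm.trans <| Ideal.radical_le_jacobson.trans <|
      Ideal.jacobson_mono (LinearMap.annihilator_le_of_surjective T.mkQ T.mkQ_surjective)
  refine Submodule.top_ne_ideal_smul_of_le_jacobson_annihilator hm' ?_
  calc (⊤ : Submodule R (M ⧸ T))
      = (T ⊔ m • ⊤).map T.mkQ := by rw [hT, Submodule.map_top, T.range_mkQ]
    _ = m • ⊤ := by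
      rw [Submodule.map_sup, Submodule.mkQ_map_self, bot_sup_eq, Submodule.map_smul'',
        Submodule.map_top, T.range_mkQ]

theorem canBeGeneratedBy_finrank_quotient [Module.Finite R M] {m : Ideal R} [m.IsMaximal]
    (hm : m ≤ (Module.annihilator R M).radical) :
    CanBeGeneratedBy R M (Module.finrank (R ⧸ m) (M ⧸ m • (⊤ : Submodule R M))) := by
  classical
  let := Ideal.Quotient.field m
  have : Module.Finite (R ⧸ m) (M ⧸ m • (⊤ : Submodule R M)) :=
    Module.Finite.of_restrictScalars_finite R _ _
  let b := Module.finBasis (R ⧸ m) (M ⧸ m • (⊤ : Submodule R M))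
  let lift := Function.surjInv (m • (⊤ : Submodule R M)).mkQ_surjective
  have hspan : Submodule.span R (Set.range b) = ⊤ := by
    rw [← Submodule.restrictScalars_span R (R ⧸ m) Ideal.Quotient.mk_surjective, b.span_eq,
      Submodule.restrictScalars_top]
  have hlift : (m • (⊤ : Submodule R M)).mkQ ∘ lift ∘ b = b :=
    funext fun i => Function.surjInv_eq (m • (⊤ : Submodule R M)).mkQ_surjective (b i)
  refine ⟨Finset.univ.image (lift ∘ b), Finset.card_image_le.trans (by simp), ?_⟩
  refine eq_top_of_sup_smul_top_eq_top_s18 hm ?_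
  rw [sup_comm, ← Submodule.map_mkQ_eq_top, Submodule.map_span, Finset.coe_image, Finset.coe_univ,
    Set.image_univ, ← Set.range_comp, hlift, hspan]

theorem CanBeGeneratedBy.mono {j k : ℕ} (h : CanBeGeneratedBy R M j) (hjk : j ≤ k) :
    CanBeGeneratedBy R M k :=
  let ⟨G, hG, hspan⟩ := h
  ⟨G, hG.trans hjk, hspan⟩

theorem canBeGeneratedBy_of_card_quotient_le [Finite M] {m : Ideal R} [m.IsMaximal]
    [Finite (R ⧸ m)] (hm : m ≤ (Module.annihilator R M).radical) {k : ℕ}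
    (hk : Nat.card (M ⧸ m • (⊤ : Submodule R M)) ≤ Nat.card (R ⧸ m) ^ k) :
    CanBeGeneratedBy R M k := by
  let := Ideal.Quotient.field m
  refine (canBeGeneratedBy_finrank_quotient hm).mono ?_
  rw [Module.natCard_eq_pow_finrank (K := R ⧸ m)] at hk
  exact (Nat.pow_le_pow_iff_right Finite.one_lt_card).1 hk

theorem card_comap_le {N : Type*} [AddCommGroup N] [Module R N] [Finite M] [Finite N]
    (f : M →ₗ[R] N) (P : Submodule R N) :
    Nat.card (P.comap f) ≤ Nat.card (LinearMap.ker f) * Nat.card P := by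
  let g := f.submoduleComap P
  rw [Submodule.card_eq_card_quotient_mul_card (LinearMap.ker g),
    Nat.card_congr g.quotKerEquivRange.toEquiv]
  refine Nat.mul_le_mul ?_ (Nat.card_le_card_of_injective _ Subtype.val_injective)
  refine Nat.card_le_card_of_injective
    (fun x => (⟨x, congrArg Subtype.val (LinearMap.mem_ker.1 x.2)⟩ : LinearMap.ker f)) ?_
  exact fun x y h => Subtype.ext (Subtype.ext (Subtype.mk.inj h))

theorem card_ker_pow_le [Finite M] (φ : Module.End R M) (k : ℕ) :
    Nat.card (LinearMap.ker (φ ^ k)) ≤ Nat.card (LinearMap.ker φ) ^ k := by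
  induction k with
  | zero => simp [Module.End.one_eq_id]
  | succ k ih =>
    calc Nat.card (LinearMap.ker (φ ^ (k + 1)))
        ≤ Nat.card (LinearMap.ker φ) * Nat.card (LinearMap.ker (φ ^ k)) := by
          rw [pow_succ, Module.End.mul_eq_comp, LinearMap.ker_comp]
          exact card_comap_le φ _
      _ ≤ Nat.card (LinearMap.ker φ) ^ (k + 1) := by
          rw [pow_succ']
          exact Nat.mul_le_mul_left _ ih

theorem card_quotient_range_eq_card_ker [Finite M] (φ : Module.End R M) :
    Nat.card (M ⧸ LinearMap.range φ) = Nat.card (LinearMap.ker φ) := by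
  refine Nat.eq_of_mul_eq_mul_left (Nat.card_pos (α := LinearMap.range φ)) ?_
  rw [← Submodule.card_eq_card_quotient_mul_card,
    Submodule.card_eq_card_quotient_mul_card (LinearMap.ker φ),
    Nat.card_congr φ.quotKerEquivRange.toEquiv, mul_comm]

end Generators

section Socle

variable {R M : Type*} [CommRing R] [AddCommGroup M] [Module R M]
  {S : Submodule R M} {m : Ideal R}

theorem annihilator_le_radical_of_isLeast [IsNoetherian R M]
    (hS : IsLeast {T : Submodule R M | T ≠ ⊥} S) :
    Module.annihilator R S ≤ (Module.annihilator R M).radical := by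
  intro r hr
  let φ : Module.End R M := Algebra.lsmul R R M r
  obtain ⟨n, hdisj, hn⟩ := ((Module.End.eventually_disjoint_ker_pow_range_pow φ).and
    (Filter.eventually_ne_atTop 0)).exists
  have hφ (x : M) : (φ ^ n) x = r ^ n • x := by
    rw [← map_pow]
    rfl
  have hker : S ≤ LinearMap.ker (φ ^ n) := fun s hs => by
    have hrs : r • s = 0 := congrArg Subtype.val (Module.mem_annihilator.1 hr ⟨s, hs⟩)
    rw [LinearMap.mem_ker, hφ, ← Nat.sub_one_add_one hn, pow_succ, mul_smul, hrs, smul_zero]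
  have hrange : LinearMap.range (φ ^ n) = ⊥ := by_contra fun h =>
    hS.1 (le_bot_iff.1 (hdisj hker (hS.2 h)))
  refine ⟨n, Module.mem_annihilator.2 fun x => ?_⟩
  rw [← hφ, LinearMap.range_eq_bot.1 hrange, LinearMap.zero_apply]

theorem le_radical_annihilator_of_isLeast [IsNoetherian R M]
    (hS : IsLeast {T : Submodule R M | T ≠ ⊥} S) (e : S ≃ₗ[R] R ⧸ m) :
    m ≤ (Module.annihilator R M).radical := by
  rw [← Ideal.annihilator_quotient (I := m), ← e.annihilator_eq]
  exact annihilator_le_radical_of_isLeast hS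

theorem mem_of_isLeast_of_smul_eq_zero (hS : IsLeast {T : Submodule R M | T ≠ ⊥} S)
    (hm : m.IsMaximal) {x : M} (hx : ∀ r ∈ m, r • x = 0) : x ∈ S := by
  obtain rfl | hx0 := eq_or_ne x 0
  · exact S.zero_mem
  obtain ⟨s, hs, hs0⟩ := Submodule.exists_mem_ne_zero_of_ne_bot hS.1
  obtain ⟨r, rfl⟩ := Submodule.mem_span_singleton.1
    (hS.2 (Submodule.span_singleton_eq_bot.not.2 hx0) hs)
  obtain ⟨t, i, hi, hti⟩ := hm.exists_inv fun hr => hs0 (hx r hr)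
  have : t • r • x = x := by
    rw [← mul_smul, eq_sub_of_add_eq hti, sub_smul, one_smul, hx i hi, sub_zero]
  exact this ▸ S.smul_mem t hs

variable (R) in
theorem annihilator_le_torsionOf (x : M) : Module.annihilator R M ≤ Ideal.torsionOf R M x :=
  fun r hr => (Ideal.mem_torsionOf_iff x r).2 (Module.mem_annihilator.1 hr x)

theorem eq_zero_of_smul_eq_zero_of_notMem (hm : m.IsMaximal)
    (hrad : m ≤ (Module.annihilator R M).radical) {b : R} (hb : b ∉ m) {y : M} (hy : b • y = 0) :
    y = 0 := by
  rw [← Ideal.torsionOf_eq_top_iff (R := R), ← Ideal.radical_eq_top]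
  have hle : m ≤ (Ideal.torsionOf R M y).radical :=
    hrad.trans (Ideal.radical_mono (annihilator_le_torsionOf R y))
  by_contra h
  exact hb (hm.eq_of_le h hle ▸ Ideal.le_radical ((Ideal.mem_torsionOf_iff y b).2 hy))

variable {ℓ r : R} {k : ℕ}

theorem mem_span_pair_of_smul_eq_zero {f : R} {x : M} (hm : (Ideal.span {ℓ, r}).IsMaximal)
    (hrad : Ideal.span {ℓ, r} ≤ (Module.annihilator R M).radical)
    (hℓ : ℓ • x = 0) (hr : r ^ k • x ≠ 0) (hf : f • x = 0) : f ∈ Ideal.span {ℓ, r ^ (k + 1)} := by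
  suffices ∀ j ≤ k + 1, f ∈ Ideal.span {ℓ, r ^ j} from this _ le_rfl
  intro j
  induction j with
  | zero => exact fun _ => Ideal.mem_span_pair.2 ⟨0, f, by ring⟩
  | succ j ih =>
    intro hj
    obtain ⟨a, b, rfl⟩ := Ideal.mem_span_pair.1 (ih (by omega))
    have hb : b ∈ Ideal.span {ℓ, r} := by
      by_contra hb
      have hbx : b • r ^ j • x = 0 := by
        rwa [add_smul, mul_smul, hℓ, smul_zero, zero_add, mul_smul] at hf
      have hrj := eq_zero_of_smul_eq_zero_of_notMem hm hrad hb hbx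
      refine hr ?_
      rw [← Nat.sub_add_cancel (Nat.lt_succ_iff.1 hj), pow_add, mul_smul, hrj, smul_zero]
    obtain ⟨u, v, rfl⟩ := Ideal.mem_span_pair.1 hb
    exact Ideal.mem_span_pair.2 ⟨a + u * r ^ j, v, by ring⟩

theorem card_ker_lsmul_le [Finite M] (hS : IsLeast {T : Submodule R M | T ≠ ⊥} S)
    (hm : (Ideal.span {ℓ, r}).IsMaximal) (hk : ∀ x : M, ℓ • x = 0 → r ^ k • x = 0) :
    Nat.card (LinearMap.ker (Algebra.lsmul R R M ℓ)) ≤ Nat.card S ^ k := by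
  let φ : Module.End R (LinearMap.ker (Algebra.lsmul R R M ℓ)) := Algebra.lsmul R R _ r
  have hφk : φ ^ k = 0 := by
    ext x
    rw [← map_pow]
    exact hk x x.2
  have hmem (x : LinearMap.ker φ) : (x : M) ∈ S :=
    mem_of_isLeast_of_smul_eq_zero hS hm fun s hs => by
      obtain ⟨a, b, rfl⟩ := Ideal.mem_span_pair.1 hs
      have hrx : r • (x : M) = 0 := congrArg Subtype.val (LinearMap.mem_ker.1 x.2)
      have hℓx : ℓ • (x : M) = 0 := LinearMap.mem_ker.1 x.1.2
      rw [add_smul, mul_smul, hℓx, mul_smul, hrx, smul_zero, smul_zero, add_zero]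
  calc Nat.card (LinearMap.ker (Algebra.lsmul R R M ℓ))
      = Nat.card (LinearMap.ker (φ ^ k)) := by
        rw [hφk, LinearMap.ker_zero, Nat.card_congr Submodule.topEquiv.toEquiv]
    _ ≤ Nat.card (LinearMap.ker φ) ^ k := card_ker_pow_le φ k
    _ ≤ Nat.card S ^ k := Nat.pow_le_pow_left (Nat.card_le_card_of_injective
        (fun x : LinearMap.ker φ => (⟨x, hmem x⟩ : S))
        fun x y h => Subtype.ext (Subtype.ext (Subtype.mk.inj h))) k

theorem canBeGeneratedBy_of_smul_eq_zero [Finite M] (hS : IsLeast {T : Submodule R M | T ≠ ⊥} S)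
    (e : S ≃ₗ[R] R ⧸ m) (hm : m.IsMaximal) (hmℓ : m = Ideal.span {ℓ, r})
    (hk : ∀ x : M, ℓ • x = 0 → r ^ k • x = 0) : CanBeGeneratedBy R M k := by
  have : Finite (R ⧸ m) := .of_equiv S e.toEquiv
  have hrad := le_radical_annihilator_of_isLeast hS e
  have hle : LinearMap.range (Algebra.lsmul R R M ℓ) ≤ m • ⊤ := by
    rintro _ ⟨x, rfl⟩
    exact Submodule.smul_mem_smul (hmℓ ▸ Ideal.subset_span (Set.mem_insert _ _)) trivial
  refine canBeGeneratedBy_of_card_quotient_le hrad ?_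
  calc Nat.card (M ⧸ m • (⊤ : Submodule R M))
      ≤ Nat.card (M ⧸ LinearMap.range (Algebra.lsmul R R M ℓ)) :=
        by
        have : Finite (M ⧸ LinearMap.range (Algebra.lsmul R R M ℓ)) := Quotient.finite _
        exact Nat.card_le_card_of_surjective _ (Submodule.factor_surjective hle)
    _ = Nat.card (LinearMap.ker (Algebra.lsmul R R M ℓ)) := card_quotient_range_eq_card_ker _
    _ ≤ Nat.card S ^ k := card_ker_lsmul_le hS (hmℓ ▸ hm) hk
    _ = Nat.card (R ⧸ m) ^ k := by rw [Nat.card_congr e.toEquiv]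

theorem annihilator_le_span_pair_of_not_canBeGeneratedBy [Finite M]
    (hS : IsLeast {T : Submodule R M | T ≠ ⊥} S)
    (e : S ≃ₗ[R] R ⧸ m) (hm : m.IsMaximal) (hgen : ¬ CanBeGeneratedBy R M k)
    (hmℓ : m = Ideal.span {ℓ, r}) :
    Module.annihilator R M ≤ Ideal.span {ℓ, r ^ (k + 1)} := by
  have hrad := le_radical_annihilator_of_isLeast hS e
  obtain ⟨x, hℓx, hrx⟩ : ∃ x : M, ℓ • x = 0 ∧ r ^ k • x ≠ 0 := by
    contrapose! hgen
    exact canBeGeneratedBy_of_smul_eq_zero hS e hm hmℓ hgen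
  exact fun f hf => mem_span_pair_of_smul_eq_zero (hmℓ ▸ hm) (hmℓ ▸ hrad) hℓx hrx
    (Module.mem_annihilator.1 hf x)

end Socle

section PolynomialIdeals

variable {A : Type*} [CommRing A] {f : A[X]}

theorem dvd_eval_of_mem_span_pair {t b : A} (hf : f ∈ Ideal.span {X - C t, C b}) :
    b ∣ f.eval t := by
  obtain ⟨u, v, rfl⟩ := Ideal.mem_span_pair.1 hf
  exact ⟨v.eval t, by simp [mul_comm]⟩

theorem dvd_coeff_of_mem_span_pair {a : A} {n i : ℕ} (hf : f ∈ Ideal.span {C a, X ^ n})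
    (hi : i < n) : a ∣ f.coeff i := by
  obtain ⟨u, v, rfl⟩ := Ideal.mem_span_pair.1 hf
  exact ⟨u.coeff i, by simp [coeff_mul_X_pow', hi.not_ge, mul_comm]⟩

theorem mem_span_pair_pow {a : A} {n : ℕ} (hf : ∀ i < n, a ^ (n - i) ∣ f.coeff i) :
    f ∈ Ideal.span {C a, X} ^ n := by
  have hC : C a ∈ Ideal.span {C a, X} := Ideal.subset_span (Set.mem_insert _ _)
  have hX : X ∈ Ideal.span {C a, X} := Ideal.subset_span (Set.mem_insert_of_mem _ rfl)
  rw [f.as_sum_range_C_mul_X_pow]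
  refine Ideal.sum_mem _ fun i _ => ?_
  obtain hi | hi := lt_or_ge i n
  · obtain ⟨b, hb⟩ := hf i hi
    have hmonomial : C a ^ (n - i) * X ^ i ∈ Ideal.span {C a, X} ^ n := by
      simpa only [← pow_add, Nat.sub_add_cancel hi.le] using
        Ideal.mul_mem_mul (Ideal.pow_mem_pow hC (n - i)) (Ideal.pow_mem_pow hX i)
    rw [hb, C_mul, C_pow, mul_right_comm]
    exact Ideal.mul_mem_right _ _ hmonomial
  · exact Ideal.mul_mem_left _ _ (Ideal.pow_le_pow_right hi (Ideal.pow_mem_pow hX i))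

theorem pow_dvd_eval_sub_sum_range (f : A[X]) (a : A) (n : ℕ) :
    a ^ n ∣ f.eval a - ∑ i ∈ Finset.range n, f.coeff i * a ^ i := by
  induction n generalizing f with
  | zero => simp
  | succ n ih =>
    have heval : f.eval a = f.divX.eval a * a + f.coeff 0 := by
      conv_lhs => rw [← f.divX_mul_X_add, eval_add, eval_mul_X, eval_C]
    have hsum : ∑ i ∈ Finset.range (n + 1), f.coeff i * a ^ i =
        (∑ i ∈ Finset.range n, f.divX.coeff i * a ^ i) * a + f.coeff 0 := by
      simp only [Finset.sum_range_succ', Finset.sum_mul, coeff_divX, pow_succ, mul_assoc,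
        pow_zero, mul_one]
    rw [heval, hsum, add_sub_add_right_eq_sub, ← sub_mul, pow_succ]
    exact mul_dvd_mul_right (ih f.divX) a

theorem inf_span_pair_le_span_pair_pow_three {a : A} (ha : a ∈ nonZeroDivisors A) :
    Ideal.span {X, C a ^ 3} ⊓ Ideal.span {X - C a, C a ^ 3} ⊓ Ideal.span {C a, X ^ 3} ≤
      Ideal.span {C a, X} ^ 3 := by
  rintro f ⟨⟨h₀, hₐ⟩, h₂⟩
  -- Modulo `a³`, `f₁ a ≡ f(a) - f(0) - f₂ a²`, and each term on the right is divisible by `a³`.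
  have hf₂ : a ∣ f.coeff 2 := dvd_coeff_of_mem_span_pair h₂ (by norm_num)
  have hf₀ : a ^ 3 ∣ f.coeff 0 := by
    rw [coeff_zero_eq_eval_zero]
    exact dvd_eval_of_mem_span_pair (by simpa using h₀)
  have hfₐ : a ^ 3 ∣ f.eval a := dvd_eval_of_mem_span_pair (by simpa using hₐ)
  have hf₁ : a ^ 3 ∣ f.coeff 1 * a := by
    have h := (dvd_sub_right hfₐ).1 (pow_dvd_eval_sub_sum_range f a 3)
    rw [Finset.sum_range_succ, Finset.sum_range_succ, Finset.sum_range_one, pow_zero, mul_one,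
      pow_one] at h
    rw [dvd_add_left (pow_succ' a 2 ▸ mul_dvd_mul_right hf₂ _), dvd_add_right hf₀] at h
    exact h
  rw [pow_succ, dvd_cancel_right_mem_nonZeroDivisors ha] at hf₁
  refine mem_span_pair_pow fun i hi => ?_
  interval_cases i
  · exact hf₀
  · exact hf₁
  · rwa [pow_one]

end PolynomialIdeals

section ModelModule

theorem pow_smul_top_mono {R M : Type*} [CommRing R] [AddCommGroup M] [Module R M] {I J : Ideal R}
    (h : I • (⊤ : Submodule R M) ≤ J • ⊤) (k : ℕ) : I ^ k • (⊤ : Submodule R M) ≤ J ^ k • ⊤ := by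
  induction k with
  | zero => rfl
  | succ k ih =>
    calc I ^ (k + 1) • (⊤ : Submodule R M)
        = I ^ k • I • ⊤ := by rw [pow_succ, Submodule.mul_smul]
      _ ≤ I ^ k • J • ⊤ := Submodule.smul_mono le_rfl h
      _ = J • I ^ k • ⊤ := by rw [← Submodule.mul_smul, mul_comm, Submodule.mul_smul]
      _ ≤ J • J ^ k • ⊤ := Submodule.smul_mono le_rfl ih
      _ = J ^ (k + 1) • ⊤ := by rw [pow_succ', Submodule.mul_smul]

theorem eq_zero_of_natCast_mul_natCast_val_eq_zero {c m n : ℕ} [NeZero c] [NeZero m]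
    (h : n = c * m) {b : ZMod m} (hb : (c : ZMod n) * (b.val : ZMod n) = 0) : b = 0 := by
  subst h
  rw [← Nat.cast_mul, ZMod.natCast_eq_zero_iff] at hb
  rw [← ZMod.natCast_zmod_val b, ZMod.natCast_eq_zero_iff]
  exact Nat.dvd_of_mul_dvd_mul_left (NeZero.pos c) hb

/-- The underlying abelian group of the module `P₃`. -/
abbrev P₃ (p : ℕ) : Type := ZMod (p ^ 3) × ZMod (p ^ 2) × ZMod p

/-- `X` acts on `P₃` by `(a₀, a₁, a₂) ↦ (p a₁, p a₂, 0)`; multiplication by `p` from `ℤ/pⁱℤ` to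
`ℤ/pⁱ⁺¹ℤ` is computed on the canonical representative. -/
def IsShiftAction (p : ℕ) [Module ℤ[X] (P₃ p)] : Prop :=
  ∀ a : P₃ p, (X : ℤ[X]) • a =
    ((p : ZMod (p ^ 3)) * (a.2.1.val : ZMod (p ^ 3)),
      (p : ZMod (p ^ 2)) * (a.2.2.val : ZMod (p ^ 2)), 0)

namespace IsShiftAction

variable {p : ℕ} [Module ℤ[X] (P₃ p)]

theorem span_pair_smul_top_le (hX : IsShiftAction p) :
    Ideal.span {C (p : ℤ), X} • (⊤ : Submodule ℤ[X] (P₃ p)) ≤ Ideal.span {C (p : ℤ)} • ⊤ := by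
  rw [Ideal.span_insert, Submodule.sup_smul]
  refine sup_le le_rfl ?_
  rw [Submodule.ideal_span_singleton_smul, Submodule.ideal_span_singleton_smul]
  rintro _ ⟨a, -, rfl⟩
  refine ⟨((a.2.1.val : ZMod (p ^ 3)), (a.2.2.val : ZMod (p ^ 2)), 0), trivial, ?_⟩
  simp [hX a, Nat.cast_smul_eq_nsmul]

theorem span_pair_pow_three_le_annihilator (hX : IsShiftAction p) :
    Ideal.span {C (p : ℤ), X} ^ 3 ≤ Module.annihilator ℤ[X] (P₃ p) := by
  rw [← Submodule.annihilator_top, Submodule.le_annihilator_iff, ← le_bot_iff]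
  refine (pow_smul_top_mono hX.span_pair_smul_top_le 3).trans ?_
  rw [Ideal.span_singleton_pow, Submodule.ideal_span_singleton_smul]
  rintro _ ⟨a, -, rfl⟩
  have hzero {n : ℕ} (hn : n ∣ p ^ 3) (x : ZMod n) : p ^ 3 • x = 0 := by
    rw [nsmul_eq_mul, (ZMod.natCast_eq_zero_iff _ _).2 hn, zero_mul]
  have hp : p ^ 3 • a = 0 := Prod.ext (hzero dvd_rfl _) <|
    Prod.ext (hzero (pow_dvd_pow p (by norm_num)) _) (hzero (dvd_pow_self p three_ne_zero) _)
  rw [Submodule.mem_bot]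
  simpa [← Nat.cast_smul_eq_nsmul ℤ[X]] using hp

theorem X_pow_three_mem_annihilator (hX : IsShiftAction p) :
    X ^ 3 ∈ Module.annihilator ℤ[X] (P₃ p) := by
  have hmem : X ∈ Ideal.span {C (p : ℤ), X} := Ideal.subset_span (Set.mem_insert_of_mem _ rfl)
  exact hX.span_pair_pow_three_le_annihilator (Ideal.pow_mem_pow hmem 3)

theorem isSeparating [NeZero p] (hX : IsShiftAction p) :
    IsSeparating ℤ[X] ((zmodCharacter (p ^ 3)).comp (AddMonoidHom.fst _ _) :
      CharacterModule (P₃ p)) := by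
  intro a ha
  have hfst (r : ℤ[X]) : (r • a).1 = 0 :=
    zmodCharacter_injective (p ^ 3) ((ha r).trans (map_zero _).symm)
  have ha₀ : a.1 = 0 := by simpa only [one_smul] using hfst 1
  have ha₁ : a.2.1 = 0 := eq_zero_of_natCast_mul_natCast_val_eq_zero (c := p) (pow_succ' p 2) <| by
    simpa only [hX a] using hfst X
  have ha₂ : a.2.2 = 0 := eq_zero_of_natCast_mul_natCast_val_eq_zero (c := p) (sq p) <|
    eq_zero_of_natCast_mul_natCast_val_eq_zero (c := p) (pow_succ' p 2) <| by
      have h := hfst (X * X)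
      rw [mul_smul, hX, hX] at h
      exact h
  exact Prod.ext ha₀ (Prod.ext ha₁ ha₂)

end IsShiftAction

end ModelModule

theorem annihilator_le_span_pair_pow_three_of_not_canBeGeneratedBy_two {A M : Type*} [CommRing A]
    [AddCommGroup M] [Module A[X] M] [Finite M] {S : Submodule A[X] M}
    (hS : IsLeast {T : Submodule A[X] M | T ≠ ⊥} S) {a : A} (ha : a ∈ nonZeroDivisors A)
    (hm : (Ideal.span {C a, X}).IsMaximal) (e : S ≃ₗ[A[X]] A[X] ⧸ Ideal.span {C a, X})
    (hgen : ¬ CanBeGeneratedBy A[X] M 2) :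
    Module.annihilator A[X] M ≤ Ideal.span {C a, X} ^ 3 := by
  have hle {ℓ r : A[X]} (h : Ideal.span {C a, X} = Ideal.span {ℓ, r}) :
      Module.annihilator A[X] M ≤ Ideal.span {ℓ, r ^ 3} :=
    annihilator_le_span_pair_of_not_canBeGeneratedBy hS e hm hgen h
  exact (le_inf (le_inf (hle Ideal.span_pair_comm)
    (hle (by rw [Ideal.span_pair_sub_right, Ideal.span_pair_comm]))) (hle rfl)).trans
    (inf_span_pair_le_span_pair_pow_three ha)

/-- Let `p` be a prime and `Q` a cocyclic `ℤ[X]`-module (it has a simple submodule `S`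
contained in every nonzero submodule) with socle isomorphic to `ℤ[X]/(p, X)` and
`|Q| = p⁶`.  Then `Q` is generated by at most three elements, and if `Q` cannot be
generated by two elements, then `Q` is isomorphic to `P₃`, the module
`ℤ/p³ℤ × ℤ/p²ℤ × ℤ/pℤ` on which `X` acts by `X•(a₀,a₁,a₂) = (p•a₁, p•a₂, 0)`. -/
theorem cocyclic_ZX_module_of_card_p6 (p : ℕ) (hp : p.Prime)
    (Q : Type*) [AddCommGroup Q] [Module (Polynomial ℤ) Q]
    (S : Submodule (Polynomial ℤ) Q)
    (hS_simple : IsSimpleModule (Polynomial ℤ) S)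
    (hS_min : ∀ T : Submodule (Polynomial ℤ) Q, T ≠ ⊥ → S ≤ T)
    (hS_iso : Nonempty (S ≃ₗ[Polynomial ℤ]
      (Polynomial ℤ ⧸ Ideal.span {Polynomial.C (p : ℤ), (Polynomial.X : Polynomial ℤ)})))
    (hcard : Nat.card Q = p ^ 6)
    [Module (Polynomial ℤ) (ZMod (p ^ 3) × ZMod (p ^ 2) × ZMod p)]
    [IsScalarTower ℤ (Polynomial ℤ) (ZMod (p ^ 3) × ZMod (p ^ 2) × ZMod p)]
    (hX : ∀ a : ZMod (p ^ 3) × ZMod (p ^ 2) × ZMod p,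
      (Polynomial.X : Polynomial ℤ) • a =
        ((p : ZMod (p ^ 3)) * ((a.2.1.val : ℕ) : ZMod (p ^ 3)),
         (p : ZMod (p ^ 2)) * ((a.2.2.val : ℕ) : ZMod (p ^ 2)),
         0)) :
    (∃ G : Finset Q, G.card ≤ 3 ∧ Submodule.span (Polynomial ℤ) (G : Set Q) = ⊤) ∧
    ((¬ ∃ G : Finset Q, G.card ≤ 2 ∧ Submodule.span (Polynomial ℤ) (G : Set Q) = ⊤) →
      Nonempty (Q ≃ₗ[Polynomial ℤ] (ZMod (p ^ 3) × ZMod (p ^ 2) × ZMod p))) := by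
  have : Finite Q := Nat.finite_of_card_ne_zero (hcard ▸ (pow_pos hp.pos 6).ne')
  have : NeZero p := ⟨hp.ne_zero⟩
  have hpX : IsShiftAction p := hX
  have hS : IsLeast {T : Submodule ℤ[X] Q | T ≠ ⊥} S :=
    ⟨Submodule.nontrivial_iff_ne_bot.1 hS_simple.nontrivial, fun _ => hS_min _⟩
  obtain ⟨e⟩ := hS_iso
  have hm : (Ideal.span {C (p : ℤ), X}).IsMaximal :=
    Ideal.isMaximal_def.2 (isSimpleModule_iff_isCoatom.1 (.congr e.symm))
  have hcard' : Nat.card Q = Nat.card (P₃ p) := by simp [hcard, ← pow_add, ← pow_succ]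
  have hiso (h : ¬ CanBeGeneratedBy ℤ[X] Q 2) : Nonempty (Q ≃ₗ[ℤ[X]] P₃ p) := by
    obtain ⟨ψ, hψ⟩ := exists_isSeparating_of_isLeast hS
    have hle := annihilator_le_span_pair_pow_three_of_not_canBeGeneratedBy_two hS
      (mem_nonZeroDivisors_of_ne_zero (Int.natCast_ne_zero.2 hp.ne_zero)) hm e h
    exact hψ.nonempty_linearEquiv_of_annihilator_le hpX.isSeparating
      (hle.trans hpX.span_pair_pow_three_le_annihilator) hcard'
  refine ⟨?_, hiso⟩
  by_cases h : CanBeGeneratedBy ℤ[X] Q 2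
  · exact h.mono (Nat.le_succ 2)
  · obtain ⟨f⟩ := hiso h
    have hX3 : X ^ 3 ∈ Module.annihilator ℤ[X] Q :=
      f.annihilator_eq ▸ hpX.X_pow_three_mem_annihilator
    exact canBeGeneratedBy_of_smul_eq_zero hS e hm rfl fun x _ => Module.mem_annihilator.1 hX3 x
end
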